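/- arXiv:1608.08155 — 2 statements merged into one kernel-verified Lean document; each statement's English description precedes it below -/
import Mathlib

section
/- Let R be a Noetherian ring, M a finitely generated R-module of dimension d, and x = x_1, ..., x_d a sequence of d elements of R. Then the following are equivalent: (i) H^d_{(x)}(M) = 0; (ii) ⋂_{n ≥ 1} (x_1^n, ..., x_d^n)^lim_M = M; (iii) dim R/Ann(H^d_{(x)}(M)) < d. -/
/-!
The proof compares three descriptions of `H = H^d_{(x)}(M)`: as a direct limit of quotients of `M`,
through torsion in an injective resolution, and as a colimit of `Ext` modules.

*Algebra.* Let `limSub x M d n` be the kernel of the map from `M` to the direct limit of the modules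
`M / (x₁ⁿ, …, x_dⁿ) M`, with transition maps given by multiplication with `x₁ ⋯ x_d`. For `n ≥ 1` it
is the limit closure of `x₁ⁿ, …, x_dⁿ` (`limitClosure_pow_eq_limSub`), so (ii) says that this direct
limit vanishes.

*The limit is local cohomology.* Given an injective resolution `E` of `M`, every `m : M` and
exponent `n` are assigned a cocycle `z` in the `(x)`-power torsion of `E^d` (`InjRes.Rel`), by
iterating the connecting maps `H^r_{(x₁, …, x_r)}(M)_y → H^{r+1}_{(x₁, …, x_r, y)}(M)` with
`y = x_{r+1}`. Induction on the number of elements (`InjRes.good`) shows that `z` is a coboundary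
of a torsion element exactly when `m` lies in `limSub x M d n`, and that every cocycle arises
up to such a coboundary. The induction rests on the fact that, for the torsion submodule `Γ` of an
injective module over a Noetherian ring, the localization `Γ → Γ_y` is surjective (`torsSub_div`).

*The categorical definition.* Mathlib defines `H` as the colimit of `Ext^d(R/J^t, M)`, where `Ext`
is a left-derived functor computed by projective resolutions of `R/J^t`. The `Ext` groups of the
derived category compare with both kinds of resolutions, and through them each cocycle
`R/J^t ⟶ I^d` into an injective resolution gets a class `injExtClass`, natural in `R/J^t`. Passing
to the colimit identifies `H` with torsion cocycles modulo boundaries of torsion elements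
(`IsClass`). Hence (i) and (ii) are equivalent (`subsingleton_localCohomology_iff`).

*Dimension.* If `I = Ann H` and `dim R/I < d`, then in `R/I` any `d` elements satisfy
`(y₁ ⋯ y_d)^k ∈ (y₁^{k+1}, …, y_d^{k+1})` for some `k` (`exists_seqProd_pow_mem`); this is an
induction on `d` using that the dimension drops modulo `y_d` and its power torsion. Lifting the
relation to `R` gives `limSub x M d n = ⊤` for `n ≥ 1` (`limSub_eq_top_of_dim_lt`), so (iii)
implies (i). The converse is trivial, as the zero ring has dimension `⊥`.
-/

open IsLocalRing

universe u

/-- The limit closure `(x)^lim_M = ⋃_{n>0} ((x₁^{n+1}, …, x_r^{n+1})M :_M (x₁⋯x_r)^n)` of a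
sequence `x = x₁, …, x_r` of elements of `R` in the module `M`; the union of the increasing
family of submodules is expressed as a supremum. -/
def limitClosure {R : Type*} [CommRing R] {M : Type*} [AddCommGroup M] [Module R M]
    {r : ℕ} (x : Fin r → R) : Submodule R M :=
  ⨆ n : ℕ, (Ideal.span (Set.range fun i => x i ^ (n + 2)) • (⊤ : Submodule R M)).comap
    (LinearMap.lsmul R M ((∏ i, x i) ^ (n + 1)))

/-- The dimension of a module `M`: the Krull dimension of `R ⧸ Ann M`. -/
noncomputable def moduleDim (R M : Type*) [CommRing R] [AddCommGroup M] [Module R M] :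
    WithBot ℕ∞ :=
  ringKrullDim (R ⧸ Module.annihilator R M)

/-! ### The direct limit of the quotients by powers of a sequence -/

/-- `powSub M x r n` is the submodule `(x₀ⁿ, …, x_{r-1}ⁿ) M` of `M`, built up one element at a
time. -/
def powSub {R : Type*} [CommRing R] (M : Type*) [AddCommGroup M] [Module R M] (x : ℕ → R) :
    ℕ → ℕ → Submodule R M
  | 0, _ => ⊥
  | r + 1, n => powSub M x r n ⊔ LinearMap.range (LinearMap.lsmul R M (x r ^ n))

/-- The product `x₀ ⋯ x_{r-1}`. -/
def seqProd {R : Type*} [CommRing R] (x : ℕ → R) (r : ℕ) : R := ∏ i ∈ Finset.range r, x i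

section PowSub

variable {R : Type*} [CommRing R] {M : Type*} [AddCommGroup M] [Module R M] (x : ℕ → R)

lemma seqProd_succ (r : ℕ) : seqProd x (r + 1) = seqProd x r * x r :=
  Finset.prod_range_succ _ _

lemma mem_powSub_succ {r n : ℕ} {m : M} :
    m ∈ powSub M x (r + 1) n ↔ ∃ q ∈ powSub M x r n, ∃ m', q + x r ^ n • m' = m := by
  simp [powSub, Submodule.mem_sup]

lemma seqProd_smul_mem {r n : ℕ} (k : ℕ) {m : M} (hm : m ∈ powSub M x r n) :
    seqProd x r ^ k • m ∈ powSub M x r (n + k) := by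
  induction r generalizing m with
  | zero =>
    simp only [powSub, Submodule.mem_bot] at hm ⊢
    simp [hm]
  | succ r ih =>
    obtain ⟨q, hq, m', rfl⟩ := (mem_powSub_succ x).1 hm
    refine (mem_powSub_succ x).2 ⟨_, Submodule.smul_mem _ (x r ^ k) (ih hq),
      seqProd x r ^ k • m', ?_⟩
    rw [seqProd_succ, mul_pow, smul_add]
    simp only [smul_smul]
    congr 2 <;> ring

lemma powSub_anti {r : ℕ} {n n' : ℕ} (h : n ≤ n') : powSub M x r n' ≤ powSub M x r n := by
  induction r with
  | zero => exact le_rfl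
  | succ r ih =>
    intro m hm
    obtain ⟨q, hq, m', rfl⟩ := (mem_powSub_succ x).1 hm
    refine (mem_powSub_succ x).2 ⟨q, ih hq, x r ^ (n' - n) • m', ?_⟩
    rw [smul_smul, ← pow_add, Nat.add_sub_cancel' h]

lemma powSub_eq_span_smul (r n : ℕ) :
    powSub M x r n =
      Ideal.span ((fun i => x i ^ n) '' Set.Iio r) • (⊤ : Submodule R M) := by
  induction r with
  | zero => simp [powSub]
  | succ r ih =>
    have : Set.Iio (r + 1) = insert r (Set.Iio r) := by
      ext i; simp only [Set.mem_Iio, Set.mem_insert_iff]; omega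
    rw [powSub, ih, this, Set.image_insert_eq, Ideal.span_insert, Submodule.sup_smul, sup_comm]
    congr 1
    rw [Submodule.ideal_span_singleton_smul]
    ext m
    simp [Submodule.mem_smul_pointwise_iff_exists]

/-- `limSub x M r n` consists of the `m : M` whose class in `M / (x₀ⁿ, …, x_{r-1}ⁿ) M` dies in
the direct limit over `n` of these quotients, taken along multiplication by `x₀ ⋯ x_{r-1}`. -/
def limSub (M : Type*) [AddCommGroup M] [Module R M] (r n : ℕ) : Submodule R M where
  carrier := {m | ∃ k, seqProd x r ^ k • m ∈ powSub M x r (n + k)}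
  zero_mem' := ⟨0, by simp⟩
  add_mem' := by
    rintro a b ⟨k, hk⟩ ⟨l, hl⟩
    refine ⟨k + l, ?_⟩
    rw [smul_add]
    refine add_mem ?_ ?_
    · have := seqProd_smul_mem x l hk
      rwa [smul_smul, ← pow_add, add_comm l k, add_assoc] at this
    · have := seqProd_smul_mem x k hl
      rwa [smul_smul, ← pow_add, add_assoc, add_comm l k] at this
  smul_mem' := by
    rintro c m ⟨k, hk⟩
    refine ⟨k, ?_⟩
    rw [smul_comm]
    exact Submodule.smul_mem _ _ hk

lemma mem_limSub {r n : ℕ} {m : M} :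
    m ∈ limSub x M r n ↔ ∃ k, seqProd x r ^ k • m ∈ powSub M x r (n + k) := Iff.rfl

lemma powSub_le_limSub (r n : ℕ) : powSub M x r n ≤ limSub x M r n :=
  fun m hm => ⟨0, by simpa using hm⟩

lemma mem_limSub_of_smul {r n k : ℕ} {m : M} (h : seqProd x r ^ k • m ∈ limSub x M r (n + k)) :
    m ∈ limSub x M r n := by
  obtain ⟨l, hl⟩ := h
  refine ⟨l + k, ?_⟩
  rwa [smul_smul, ← pow_add, add_assoc, add_comm k l] at hl

end PowSub

section Dimension

/-- The ascending chain of annihilators of powers of `y` on a Noetherian module is stationary. -/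
lemma exists_pow_smul_stable {R : Type*} [CommRing R] {N : Type*} [AddCommGroup N] [Module R N]
    [IsNoetherian R N] (y : R) :
    ∃ T : ℕ, ∀ (n : ℕ) (a : N), y ^ (n + T) • a = 0 → y ^ T • a = 0 := by
  let f : ℕ →o Submodule R N :=
    { toFun := fun n => LinearMap.ker (LinearMap.lsmul R N (y ^ n))
      monotone' := by
        intro m n hmn a ha
        simp only [LinearMap.mem_ker, LinearMap.lsmul_apply] at ha ⊢
        rw [← Nat.sub_add_cancel hmn, pow_add, mul_smul, ha, smul_zero] }
  obtain ⟨T, hT⟩ := monotone_stabilizes_iff_noetherian.2 ‹IsNoetherian R N› f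
  refine ⟨T, fun n a ha => ?_⟩
  have hf : ∀ n a, a ∈ f n ↔ y ^ n • a = 0 := fun _ _ => Iff.rfl
  have h1 := (hf _ _).2 ha
  rw [← hT (n + T) (by omega)] at h1
  exact (hf _ _).1 h1

lemma powSub_map {A B : Type*} [CommRing A] [CommRing B] (g : A →+* B)
    (hg : Function.Surjective g) (x : ℕ → A) (r n : ℕ) {b : B}
    (hb : b ∈ powSub B (fun i => g (x i)) r n) : ∃ a ∈ powSub A x r n, g a = b := by
  induction r generalizing b with
  | zero =>
    simp only [powSub, Submodule.mem_bot] at hb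
    exact ⟨0, zero_mem _, by simp [hb]⟩
  | succ r ih =>
    obtain ⟨q, hq, m', rfl⟩ := (mem_powSub_succ _).1 hb
    obtain ⟨a, ha, rfl⟩ := ih hq
    obtain ⟨c, rfl⟩ := hg m'
    exact ⟨a + x r ^ n • c, (mem_powSub_succ _).2 ⟨a, ha, c, rfl⟩, by simp⟩

lemma map_seqProd {A B : Type*} [CommRing A] [CommRing B] (g : A →+* B) (x : ℕ → A) (r : ℕ) :
    g (seqProd x r) = seqProd (fun i => g (x i)) r := by
  simp [seqProd]

/-- In a Noetherian ring of dimension less than `d` every sequence of `d` elements violates the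
monomial property. Induction on `d`: pass to the quotient by `x_{d-1}` and by the
`x_{d-1}`-power torsion; both correction terms are absorbed after multiplying by a large power of
`x_{d-1}`. -/
lemma exists_seqProd_pow_mem (d : ℕ) : ∀ {A : Type*} [CommRing A] [IsNoetherianRing A]
    (_ : ringKrullDim A < (d : WithBot ℕ∞)) (x : ℕ → A),
    ∃ k, seqProd x d ^ k ∈ powSub A x d (k + 1) := by
  induction d with
  | zero =>
    intro A _ _ h x
    have : Subsingleton A := by
      by_contra hA
      rw [not_subsingleton_iff_nontrivial] at hA
      exact absurd h (not_lt.2 (by simpa using ringKrullDim_nonneg_of_nontrivial))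
    exact ⟨0, by rw [Subsingleton.elim (seqProd x 0 ^ 0) 0]; exact zero_mem _⟩
  | succ d ih =>
    intro A _ _ h x
    obtain ⟨T, hT⟩ := exists_pow_smul_stable (R := A) (N := A) (x d)
    -- the ideal of `x d`-power torsion elements
    let K : Ideal A := LinearMap.ker (LinearMap.lsmul A A (x d ^ T))
    have hK : ∀ a, a ∈ K ↔ x d ^ T * a = 0 := fun a => by simp [K]
    let B := A ⧸ K
    let y : B := Ideal.Quotient.mk K (x d)
    have hy : y ∈ nonZeroDivisors B := by
      rw [mem_nonZeroDivisors_iff_right]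
      intro b hb
      obtain ⟨a, rfl⟩ := Ideal.Quotient.mk_surjective b
      rw [← map_mul, Ideal.Quotient.eq_zero_iff_mem, hK] at hb
      rw [Ideal.Quotient.eq_zero_iff_mem, hK]
      refine hT 1 a ?_
      rw [smul_eq_mul, ← hb]; ring
    let C := B ⧸ Ideal.span {y}
    have hC : ringKrullDim C < (d : WithBot ℕ∞) := by
      have h1 : ringKrullDim C + 1 ≤ ringKrullDim A :=
        (ringKrullDim_quotient_succ_le_of_nonZeroDivisor hy).trans (ringKrullDim_quotient_le K)
      have h2 := h1.trans_lt h
      push_cast at h2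
      exact lt_of_add_lt_add_right h2
    let g : A →+* C := (Ideal.Quotient.mk (Ideal.span {y})).comp (Ideal.Quotient.mk K)
    have hg : Function.Surjective g :=
      Ideal.Quotient.mk_surjective.comp Ideal.Quotient.mk_surjective
    have hker : ∀ a, g a = 0 → ∃ c, ∃ t ∈ K, a = c * x d + t := by
      intro a ha
      have : Ideal.Quotient.mk K a ∈ Ideal.span {y} := Ideal.Quotient.eq_zero_iff_mem.1 ha
      obtain ⟨b, hb⟩ := Ideal.mem_span_singleton'.1 this
      obtain ⟨c, rfl⟩ := Ideal.Quotient.mk_surjective b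
      refine ⟨c, a - c * x d, ?_, by ring⟩
      rw [← Ideal.Quotient.eq_zero_iff_mem, map_sub, map_mul, ← hb, sub_self]
    obtain ⟨k, hk⟩ := ih hC (fun i => g (x i))
    -- enlarge `k` so that `x d ^ k` kills the torsion ideal
    have hk' := seqProd_smul_mem _ T hk
    rw [smul_eq_mul, ← pow_add, ← map_seqProd, ← map_pow] at hk'
    obtain ⟨q, hq, hqe⟩ := powSub_map g hg x d _ hk'
    obtain ⟨c, t, ht, hct⟩ := hker (seqProd x d ^ (T + k) - q) (by rw [map_sub, hqe, sub_self])
    refine ⟨T + k, ?_⟩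
    refine (mem_powSub_succ x).2 ⟨x d ^ (T + k) • q, Submodule.smul_mem _ _ ?_, c, ?_⟩
    · convert hq using 2; ring
    · have ht' := (hK t).1 ht
      rw [seqProd_succ, mul_pow, eq_add_of_sub_eq hct]
      simp only [smul_eq_mul]
      have : t * x d ^ (T + k) = 0 := by linear_combination x d ^ k * ht'
      linear_combination -this

lemma powSub_pow {A : Type*} [CommRing A] (M : Type*) [AddCommGroup M] [Module A M]
    (x : ℕ → A) (r n k : ℕ) : powSub M (fun i => x i ^ n) r k = powSub M x r (n * k) := by
  induction r with
  | zero => rfl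
  | succ r ih => simp only [powSub, ih, ← pow_mul]

/-- If `dim R/I < d` and `I M` consists of elements dying in the limit, then everything dies. -/
lemma limSub_eq_top_of_dim_lt {R : Type*} [CommRing R] [IsNoetherianRing R] {M : Type*}
    [AddCommGroup M] [Module R M] (x : ℕ → R) (d : ℕ) (I : Ideal R)
    (hI : ringKrullDim (R ⧸ I) < (d : WithBot ℕ∞))
    (hM : ∀ n, ∀ a ∈ I, ∀ m : M, a • m ∈ limSub x M d n) (n : ℕ) (m : M) :
    m ∈ limSub x M d (n + 1) := by
  obtain ⟨k, hk⟩ := exists_seqProd_pow_mem d hI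
    (fun i => Ideal.Quotient.mk I (x i ^ (n + 1)))
  rw [← map_seqProd _ (fun i => x i ^ (n + 1)), ← map_pow] at hk
  obtain ⟨q, hq, hqe⟩ := powSub_map (Ideal.Quotient.mk I) Ideal.Quotient.mk_surjective
    (fun i => x i ^ (n + 1)) d _ hk
  have ha : seqProd (fun i => x i ^ (n + 1)) d ^ k - q ∈ I := by
    rw [← Ideal.Quotient.eq_zero_iff_mem, map_sub, hqe, sub_self]
  have hprod : seqProd (fun i => x i ^ (n + 1)) d ^ k = seqProd x d ^ ((n + 1) * k) := by
    simp only [seqProd, Finset.prod_pow, pow_mul]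
  rw [hprod] at ha
  rw [powSub_pow] at hq
  refine mem_limSub_of_smul x (k := (n + 1) * k) ?_
  have hqm : q • m ∈ powSub M x d (n + 1 + (n + 1) * k) := by
    rw [powSub_eq_span_smul] at hq ⊢
    rw [show n + 1 + (n + 1) * k = (n + 1) * (k + 1) by ring]
    refine Submodule.smul_mem_smul ?_ trivial
    simpa using hq
  have := add_mem (hM (n + 1 + (n + 1) * k) _ ha m) (powSub_le_limSub x _ _ hqm)
  rwa [sub_smul, sub_add_cancel] at this

end Dimension

/-! ### Elements killed by powers of `x₀, …, x_{r-1}` -/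

section Torsion

variable {R : Type*} [CommRing R] (x : ℕ → R)

/-- The submodule of elements killed by some power of each of `x₀, …, x_{r-1}`. -/
def torsSub (r : ℕ) (E : Type*) [AddCommGroup E] [Module R E] : Submodule R E where
  carrier := {e | ∀ i < r, ∃ t : ℕ, x i ^ t • e = 0}
  zero_mem' := fun _ _ => ⟨0, smul_zero _⟩
  add_mem' := by
    intro a b ha hb i hi
    obtain ⟨s, hs⟩ := ha i hi
    obtain ⟨t, ht⟩ := hb i hi
    refine ⟨s + t, ?_⟩
    linear_combination (norm := module) (x i ^ t) • hs + (x i ^ s) • ht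
  smul_mem' := by
    intro c a ha i hi
    obtain ⟨s, hs⟩ := ha i hi
    exact ⟨s, by rw [smul_comm, hs, smul_zero]⟩

variable {x} {E F : Type*} [AddCommGroup E] [Module R E] [AddCommGroup F] [Module R F]

lemma mem_torsSub {r : ℕ} {e : E} :
    e ∈ torsSub x r E ↔ ∀ i < r, ∃ t : ℕ, x i ^ t • e = 0 := Iff.rfl

lemma mem_torsSub_zero (e : E) : e ∈ torsSub x 0 E := fun _ h => absurd h (Nat.not_lt_zero _)

lemma mem_torsSub_succ {r : ℕ} {e : E} :
    e ∈ torsSub x (r + 1) E ↔ e ∈ torsSub x r E ∧ ∃ t : ℕ, x r ^ t • e = 0 := by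
  simp only [mem_torsSub, Nat.lt_succ_iff_lt_or_eq]
  exact ⟨fun h => ⟨fun i hi => h i (Or.inl hi), h r (Or.inr rfl)⟩,
    fun h i hi => hi.elim (h.1 i) (by rintro rfl; exact h.2)⟩

lemma torsSub_uniform {r : ℕ} {e : E} (he : e ∈ torsSub x r E) :
    ∃ T : ℕ, ∀ i < r, x i ^ T • e = 0 := by
  induction r with
  | zero => exact ⟨0, fun i hi => absurd hi (Nat.not_lt_zero _)⟩
  | succ r ih =>
    obtain ⟨h1, t, ht⟩ := mem_torsSub_succ.1 he
    obtain ⟨T, hT⟩ := ih h1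
    refine ⟨T + t, fun i hi => ?_⟩
    rcases Nat.lt_succ_iff_lt_or_eq.1 hi with hi | rfl
    · linear_combination (norm := module) (x i ^ t) • hT i hi
    · linear_combination (norm := module) (x i ^ T) • ht

lemma map_mem_torsSub (f : E →ₗ[R] F) {r : ℕ} {e : E} (he : e ∈ torsSub x r E) :
    f e ∈ torsSub x r F := fun i hi => by
  obtain ⟨t, ht⟩ := he i hi
  exact ⟨t, by rw [← map_smul, ht, map_zero]⟩

/-- On an injective module over a Noetherian ring, multiplication by `yⁿ` is surjective up to
`y`-power torsion, even after restricting to the elements killed by an ideal `a`. This is because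
`y^(n+N)` acting on `R/a` has the same kernel as `y^N` for large `N`. -/
lemma exists_div_of_injective {R : Type u} [CommRing R] [IsNoetherianRing R] {E : Type u}
    [AddCommGroup E] [Module R E] [Module.Injective R E] (a : Ideal R) (y : R) (n : ℕ) {e : E}
    (he : ∀ c ∈ a, c • e = 0) :
    ∃ w : E, (∀ c ∈ a, c • w = 0) ∧ ∃ N : ℕ, y ^ N • (y ^ n • w - e) = 0 := by
  obtain ⟨N, hN⟩ := exists_pow_smul_stable (R := R) (N := R ⧸ a) y
  let f : (R ⧸ a) →ₗ[R] (R ⧸ a) := LinearMap.lsmul R (R ⧸ a) (y ^ (n + N))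
  let g : (R ⧸ a) →ₗ[R] E := Submodule.liftQ a (LinearMap.toSpanSingleton R E (y ^ N • e)) (by
    intro c hc
    rw [LinearMap.mem_ker, LinearMap.toSpanSingleton_apply, smul_comm, he c hc, smul_zero])
  have hg : ∀ c : R, g (Submodule.Quotient.mk c) = c • y ^ N • e := fun c => rfl
  have hker : LinearMap.ker f ≤ LinearMap.ker g := by
    intro b hb
    have hb' : y ^ N • b = 0 := hN n b hb
    obtain ⟨c, rfl⟩ := Submodule.Quotient.mk_surjective a b
    rw [← Submodule.Quotient.mk_smul, Submodule.Quotient.mk_eq_zero] at hb'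
    rw [LinearMap.mem_ker, hg, ← he _ hb', smul_smul, smul_eq_mul, mul_comm]
  obtain ⟨h, hh⟩ := Module.Injective.out ((LinearMap.ker f).liftQ f le_rfl)
    (LinearMap.ker_eq_bot.1 (Submodule.ker_liftQ_eq_bot _ _ _ le_rfl))
    ((LinearMap.ker f).liftQ g hker)
  have hfg : ∀ b, h (f b) = g b := fun b => hh (Submodule.Quotient.mk b)
  refine ⟨h (Submodule.Quotient.mk 1), fun c hc => ?_, N, ?_⟩
  · rw [← map_smul, ← Submodule.Quotient.mk_smul, (Submodule.Quotient.mk_eq_zero a).2, map_zero]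
    simpa using hc
  · have h1 := hfg (Submodule.Quotient.mk 1)
    rw [hg, one_smul] at h1
    have h2 : y ^ (n + N) • h (Submodule.Quotient.mk 1) = y ^ N • e := by
      rw [← h1, ← map_smul]; rfl
    linear_combination (norm := module) h2

/-- For injective `E`, the localization map `Γ(E) → Γ(E)_y` of the torsion submodule
`Γ(E) = torsSub x r E` is surjective: `e / yⁿ` is the image of some `w`. -/
lemma torsSub_div {R : Type u} [CommRing R] [IsNoetherianRing R] {x : ℕ → R} {E : Type u}
    [AddCommGroup E] [Module R E] [Module.Injective R E] (y : R) (n : ℕ) {r : ℕ} {e : E}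
    (he : e ∈ torsSub x r E) :
    ∃ w ∈ torsSub x r E, ∃ N : ℕ, y ^ N • (y ^ n • w - e) = 0 := by
  obtain ⟨T, hT⟩ := torsSub_uniform he
  let a : Ideal R := Ideal.span ((fun i => x i ^ T) '' Set.Iio r)
  have ha : a ≤ LinearMap.ker (LinearMap.toSpanSingleton R E e) := by
    rw [Ideal.span_le]
    rintro _ ⟨i, hi, rfl⟩
    simpa using hT i hi
  obtain ⟨w, hw, N, hN⟩ := exists_div_of_injective a y n (e := e) fun c hc => by simpa using ha hc
  exact ⟨w, fun i hi => ⟨T, hw _ (Ideal.subset_span ⟨i, hi, rfl⟩)⟩, N, hN⟩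

end Torsion

/-! ### Classes in top local cohomology through an injective resolution -/

/-- An injective resolution of the module `M`, in terms of modules and linear maps. -/
structure InjRes (R : Type u) [CommRing R] (M : Type u) [AddCommGroup M] [Module R M]
    (E : ℕ → Type u) [∀ i, AddCommGroup (E i)] [∀ i, Module R (E i)] where
  /-- the augmentation -/
  ι : M →ₗ[R] E 0
  /-- the differential -/
  d : ∀ i, E i →ₗ[R] E (i + 1)
  ι_inj : Function.Injective ι
  d_ι : ∀ m, d 0 (ι m) = 0
  exact_zero : ∀ z, d 0 z = 0 → ∃ m, ι m = z
  d_d : ∀ i e, d (i + 1) (d i e) = 0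
  exact_succ : ∀ i z, d (i + 1) z = 0 → ∃ w, d i w = z
  inj : ∀ i, Module.Injective R (E i)

namespace InjRes

variable {R : Type u} [CommRing R] {M : Type u} [AddCommGroup M] [Module R M]
  {E : ℕ → Type u} [∀ i, AddCommGroup (E i)] [∀ i, Module R (E i)] (C : InjRes R M E) (x : ℕ → R)

/-- The boundaries of degree `j` in the subcomplex of elements which are torsion with respect to
`x₀, …, x_{r-1}`. -/
def bdry (r : ℕ) : (j : ℕ) → Submodule R (E j)
  | 0 => ⊥
  | j + 1 => (torsSub x r (E j)).map (C.d j)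

/-- `C.Rel x r n m z` says that the cocycle `z` of degree `r` represents the image of `m` under
`M → M / (x₀ⁿ, …, x_{r-1}ⁿ) M → H^r_{(x₀, …, x_{r-1})}(M)`. The recursion is the connecting map
`H^r_{(x₀, …, x_{r-1})}(M)_{y} → H^{r+1}_{(x₀, …, x_{r-1}, y)}(M)`, `y = x_r`, applied to the
class of `z₀ / yⁿ`: lift `z₀ / yⁿ` to `w` modulo `y`-power torsion and take `d w`. -/
def Rel : (r n : ℕ) → M → E r → Prop
  | 0, _, m, z => z = C.ι m
  | r + 1, n, m, z => ∃ z₀ w N, Rel r n m z₀ ∧ w ∈ torsSub x r (E r) ∧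
      x r ^ N • (x r ^ n • w - z₀) = 0 ∧ z = C.d r w

variable {C x}

lemma bdry_le {r j : ℕ} {b : E j} (hb : b ∈ C.bdry x r j) :
    b ∈ torsSub x r (E j) ∧ C.d j b = 0 := by
  cases j with
  | zero =>
    obtain rfl : b = 0 := hb
    exact ⟨zero_mem _, map_zero _⟩
  | succ j =>
    obtain ⟨g, hg, rfl⟩ := hb
    exact ⟨map_mem_torsSub _ hg, C.d_d _ _⟩

lemma bdry_div [IsNoetherianRing R] {r j : ℕ} (y : R) (n : ℕ) {b : E j}
    (hb : b ∈ C.bdry x r j) : ∃ b' ∈ C.bdry x r j, ∃ N : ℕ, y ^ N • (y ^ n • b' - b) = 0 := by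
  cases j with
  | zero =>
    obtain rfl : b = 0 := hb
    exact ⟨0, zero_mem _, 0, by simp⟩
  | succ j =>
    obtain ⟨g, hg, rfl⟩ := hb
    have := C.inj j
    obtain ⟨w, hw, N, hN⟩ := torsSub_div y n hg
    refine ⟨C.d j w, ⟨w, hw, rfl⟩, N, ?_⟩
    rw [← map_smul, ← map_sub, ← map_smul, hN, map_zero]

variable (C x) in
/-- The properties of degree `r` and of the first `r` elements that are carried through the
induction on `r`. The last three say that `Rel` induces an isomorphism from the direct limit of
the `M / (x₀ⁿ, …, x_{r-1}ⁿ) M` to the `r`-th cohomology of the torsion subcomplex; `exact` says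
that the cohomology of the latter vanishes above degree `r`. -/
structure Good (r : ℕ) : Prop where
  exact : ∀ j ≥ r, ∀ z ∈ torsSub x r (E (j + 1)), C.d (j + 1) z = 0 →
    ∃ w ∈ torsSub x r (E j), C.d j w = z
  total : ∀ n m, ∃ z, C.Rel x r n m z
  cocycle : ∀ {n m z}, C.Rel x r n m z → z ∈ torsSub x r (E r) ∧ C.d r z = 0
  add : ∀ {n m z m' z'}, C.Rel x r n m z → C.Rel x r n m' z' → C.Rel x r n (m + m') (z + z')
  smul : ∀ {n m z} (c : R), C.Rel x r n m z → C.Rel x r n (c • m) (c • z)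
  zero_iff : ∀ {n m z}, C.Rel x r n m z → (z ∈ C.bdry x r r ↔ m ∈ limSub x M r n)
  surj : ∀ z ∈ torsSub x r (E r), C.d r z = 0 → ∃ n m z', C.Rel x r n m z' ∧
    z - z' ∈ C.bdry x r r
  compat : ∀ {n k m z z'}, C.Rel x r n m z → C.Rel x r (n + k) (seqProd x r ^ k • m) z' →
    z - z' ∈ C.bdry x r r

lemma Good.sub {r : ℕ} (h : Good C x r) {n m z m' z'} (h1 : C.Rel x r n m z)
    (h2 : C.Rel x r n m' z') : C.Rel x r n (m - m') (z - z') := by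
  have := h.add h1 (h.smul (-1) h2)
  simpa [sub_eq_add_neg] using this

/-- Every class is represented at all sufficiently high levels. -/
lemma Good.surj_large {r : ℕ} (h : Good C x r) (z : E r) (hz : z ∈ torsSub x r (E r))
    (hdz : C.d r z = 0) : ∃ l, ∀ s ≥ l, ∃ m z', C.Rel x r s m z' ∧ z - z' ∈ C.bdry x r r := by
  obtain ⟨l, m, z', h1, h2⟩ := h.surj z hz hdz
  refine ⟨l, fun s hs => ?_⟩
  obtain ⟨k, rfl⟩ := Nat.exists_eq_add_of_le hs
  obtain ⟨z'', h3⟩ := h.total (l + k) (seqProd x r ^ k • m)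
  refine ⟨_, z'', h3, ?_⟩
  have := add_mem h2 (h.compat h1 h3)
  rwa [sub_add_sub_cancel] at this

lemma good_zero : Good C x 0 where
  exact j _ z _ hdz := by
    obtain ⟨w, hw⟩ := C.exact_succ j z hdz
    exact ⟨w, mem_torsSub_zero _, hw⟩
  total n m := ⟨_, rfl⟩
  cocycle h := by
    obtain rfl := h
    exact ⟨mem_torsSub_zero _, C.d_ι _⟩
  add h h' := by
    obtain rfl := h
    obtain rfl := h'
    exact (map_add _ _ _).symm
  smul c h := by
    obtain rfl := h
    exact (map_smul _ _ _).symm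
  zero_iff {n m z} h := by
    obtain rfl := h
    have : m ∈ limSub x M 0 n ↔ m = 0 := by
      simp [mem_limSub, powSub, seqProd]
    rw [this, bdry, Submodule.mem_bot, map_eq_zero_iff _ C.ι_inj]
  surj z _ hdz := by
    obtain ⟨m, rfl⟩ := C.exact_zero z hdz
    exact ⟨0, m, _, rfl, by simp⟩
  compat h h' := by
    obtain rfl := h
    obtain rfl := h'
    simp [seqProd]

lemma Good.exact_succ [IsNoetherianRing R] {r : ℕ} (h : Good C x r) (j : ℕ) (hj : j ≥ r + 1)
    (z : E (j + 1)) (hz : z ∈ torsSub x (r + 1) (E (j + 1))) (hdz : C.d (j + 1) z = 0) :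
    ∃ w ∈ torsSub x (r + 1) (E j), C.d j w = z := by
  obtain ⟨hz1, N, hN⟩ := mem_torsSub_succ.1 hz
  obtain ⟨g, hg, rfl⟩ := h.exact j (by omega) z hz1 hdz
  obtain ⟨j, rfl⟩ : ∃ j', j = j' + 1 := ⟨j - 1, by omega⟩
  obtain ⟨e, he, hde⟩ := h.exact j (by omega) (x r ^ N • g) (Submodule.smul_mem _ _ hg)
    (by rw [map_smul, hN])
  have := C.inj j
  obtain ⟨w, hw, K, hK⟩ := torsSub_div (x r) N he
  have hK' := congrArg (C.d j) hK
  simp only [map_smul, map_sub, map_zero, hde] at hK'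
  refine ⟨g - C.d j w, mem_torsSub_succ.2 ⟨sub_mem hg (map_mem_torsSub _ hw), K + N, ?_⟩, ?_⟩
  · linear_combination (norm := module) (-1 : R) • hK'
  · rw [map_sub, C.d_d, sub_zero]

lemma Good.cocycle_succ {r : ℕ} (h : Good C x r) {n m z}
    (hz : C.Rel x (r + 1) n m z) : z ∈ torsSub x (r + 1) (E (r + 1)) ∧ C.d (r + 1) z = 0 := by
  obtain ⟨z₀, w, N, h0, hw, hN, rfl⟩ := hz
  refine ⟨mem_torsSub_succ.2 ⟨map_mem_torsSub _ hw, N + n, ?_⟩, C.d_d _ _⟩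
  have := congrArg (C.d r) hN
  simp only [map_smul, map_sub, map_zero, (h.cocycle h0).2] at this
  linear_combination (norm := module) this

lemma Good.zero_of_mem_bdry {r : ℕ} (h : Good C x r) {n m z}
    (hz : C.Rel x (r + 1) n m z) (hb : z ∈ C.bdry x (r + 1) (r + 1)) :
    m ∈ limSub x M (r + 1) n := by
  obtain ⟨z₀, w, N, h0, hw, hN, rfl⟩ := hz
  obtain ⟨g, hg, hgw⟩ := hb
  obtain ⟨hg1, t, ht⟩ := mem_torsSub_succ.1 hg
  -- `c` is a cocycle and `z₀ = yⁿ c` up to `y`-power torsion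
  obtain ⟨l, hl⟩ := h.surj_large (w - g) (sub_mem hw hg1) (by rw [map_sub, hgw, sub_self])
  obtain ⟨m', c', hc', hcb⟩ := hl (n + l) (by omega)
  obtain ⟨z₀', h0'⟩ := h.total (n + l) (seqProd x r ^ l • m)
  have hb0 := h.compat h0 h0'
  have hrel := h.sub (h.smul (x r ^ (N + t)) h0') (h.smul (x r ^ (n + (N + t))) hc')
  have hmem : x r ^ (N + t) • z₀' - x r ^ (n + (N + t)) • c' ∈ C.bdry x r r := by
    have := sub_mem (Submodule.smul_mem _ (x r ^ (n + (N + t))) hcb)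
      (Submodule.smul_mem _ (x r ^ (N + t)) hb0)
    convert this using 1
    linear_combination (norm := module) (-x r ^ t) • hN + (x r ^ (n + N)) • ht
  obtain ⟨j, hj⟩ := (h.zero_iff hrel).1 hmem
  rw [mem_limSub]
  refine ⟨j + l + (N + t), (mem_powSub_succ x).2
    ⟨x r ^ (j + l) • seqProd x r ^ (N + t) • seqProd x r ^ j •
      (x r ^ (N + t) • seqProd x r ^ l • m - x r ^ (n + (N + t)) • m'), Submodule.smul_mem _ _ ?_,
      seqProd x r ^ (N + t + j) • m', ?_⟩⟩
  · convert seqProd_smul_mem x (N + t) hj using 2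
    omega
  · rw [seqProd_succ]
    module

lemma Good.mem_bdry_of_zero [IsNoetherianRing R] {r : ℕ} (h : Good C x r) {n m z}
    (hz : C.Rel x (r + 1) n m z) (hm : m ∈ limSub x M (r + 1) n) :
    z ∈ C.bdry x (r + 1) (r + 1) := by
  obtain ⟨z₀, w, N, h0, hw, hN, rfl⟩ := hz
  obtain ⟨k, hk⟩ := hm
  obtain ⟨q, hq, m', hqm⟩ := (mem_powSub_succ x).1 hk
  obtain ⟨c, hc⟩ := h.total (n + k) m'
  obtain ⟨z₀', h0'⟩ := h.total (n + k) (seqProd x r ^ k • m)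
  have hrel := h.sub (h.smul (x r ^ k) h0') (h.smul (x r ^ (n + k)) hc)
  have hq' : x r ^ k • seqProd x r ^ k • m - x r ^ (n + k) • m' = q := by
    rw [seqProd_succ] at hqm
    linear_combination (norm := module) -hqm
  rw [hq'] at hrel
  have hb : x r ^ k • z₀ - x r ^ (n + k) • c ∈ C.bdry x r r := by
    have := add_mem ((h.zero_iff hrel).2 (powSub_le_limSub x _ _ hq))
      (Submodule.smul_mem _ (x r ^ k) (h.compat h0 h0'))
    convert this using 1
    module
  obtain ⟨b', hb', P, hP⟩ := bdry_div (x r) (n + k) hb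
  obtain ⟨hc1, hc2⟩ := h.cocycle hc
  obtain ⟨hb1, hb2⟩ := bdry_le hb'
  refine ⟨w - c - b', mem_torsSub_succ.2 ⟨sub_mem (sub_mem hw hc1) hb1, P + N + n + k, ?_⟩, ?_⟩
  · linear_combination (norm := module) (x r ^ (P + k)) • hN - (x r ^ N) • hP
  · rw [map_sub, map_sub, hc2, hb2, sub_zero, sub_zero]

lemma Good.surj_succ [IsNoetherianRing R] {r : ℕ} (h : Good C x r) (z : E (r + 1))
    (hz : z ∈ torsSub x (r + 1) (E (r + 1))) (hdz : C.d (r + 1) z = 0) :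
    ∃ n m, C.Rel x (r + 1) n m z := by
  obtain ⟨hz1, n, hn⟩ := mem_torsSub_succ.1 hz
  obtain ⟨w, hw, rfl⟩ := h.exact r le_rfl z hz1 hdz
  obtain ⟨l, hl⟩ := h.surj_large (x r ^ n • w) (Submodule.smul_mem _ _ hw) (by rw [map_smul, hn])
  obtain ⟨m, z₀, h0, hb⟩ := hl (n + l) (by omega)
  obtain ⟨b', hb', P, hP⟩ := bdry_div (x r) (n + l) (Submodule.smul_mem _ (x r ^ l) hb)
  obtain ⟨hb1, hb2⟩ := bdry_le hb'
  refine ⟨n + l, x r ^ l • m, x r ^ l • z₀, w - b', P, h.smul _ h0, sub_mem hw hb1, ?_, ?_⟩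
  · linear_combination (norm := module) -hP
  · rw [map_sub, hb2, sub_zero]

lemma Good.compat_succ [IsNoetherianRing R] {r : ℕ} (h : Good C x r) {n k m z z'}
    (hz : C.Rel x (r + 1) n m z) (hz' : C.Rel x (r + 1) (n + k) (seqProd x (r + 1) ^ k • m) z') :
    z - z' ∈ C.bdry x (r + 1) (r + 1) := by
  obtain ⟨z₀, w, N, h0, hw, hN, rfl⟩ := hz
  obtain ⟨z₀', w', N', h0', hw', hN', rfl⟩ := hz'
  have h1 := h.smul (x r ^ k) h0
  rw [seqProd_succ, mul_pow, mul_smul] at h0'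
  obtain ⟨b', hb', P, hP⟩ := bdry_div (x r) (n + k) (h.compat h1 h0')
  obtain ⟨hb1, hb2⟩ := bdry_le hb'
  refine ⟨w - w' - b',
    mem_torsSub_succ.2 ⟨sub_mem (sub_mem hw hw') hb1, P + N + N' + n + k, ?_⟩, ?_⟩
  · linear_combination (norm := module) (x r ^ (P + N' + k)) • hN -
      (x r ^ (P + N)) • hN' - (x r ^ (N + N')) • hP
  · rw [map_sub, map_sub, hb2, sub_zero]

lemma Good.succ [IsNoetherianRing R] {r : ℕ} (h : Good C x r) : Good C x (r + 1) where
  exact := h.exact_succ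
  total n m := by
    obtain ⟨z₀, h0⟩ := h.total n m
    have := C.inj r
    obtain ⟨w, hw, N, hN⟩ := torsSub_div (x r) n (h.cocycle h0).1
    exact ⟨_, z₀, w, N, h0, hw, hN, rfl⟩
  cocycle := h.cocycle_succ
  add := by
    rintro n m _ m' _ ⟨z₀, w, N, h0, hw, hN, rfl⟩ ⟨z₀', w', N', h0', hw', hN', rfl⟩
    refine ⟨z₀ + z₀', w + w', N + N', h.add h0 h0', add_mem hw hw', ?_, (map_add _ _ _).symm⟩
    linear_combination (norm := module) (x r ^ N') • hN + (x r ^ N) • hN'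
  smul := by
    rintro n m _ c ⟨z₀, w, N, h0, hw, hN, rfl⟩
    refine ⟨c • z₀, c • w, N, h.smul c h0, Submodule.smul_mem _ _ hw, ?_, (map_smul _ _ _).symm⟩
    linear_combination (norm := module) c • hN
  zero_iff hz := ⟨h.zero_of_mem_bdry hz, h.mem_bdry_of_zero hz⟩
  surj z hz hdz := by
    obtain ⟨n, m, hr⟩ := h.surj_succ z hz hdz
    exact ⟨n, m, z, hr, by simp⟩
  compat := h.compat_succ

variable (C x) in
lemma good [IsNoetherianRing R] (r : ℕ) : Good C x r := by
  induction r with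
  | zero => exact good_zero
  | succ r ih => exact ih.succ

end InjRes

/-! ### The derived functor `Ext` through projective and injective resolutions -/

section OldExt

open CategoryTheory Opposite

/-- The linear map sending a cocycle of a complex of modules to its cohomology class. -/
noncomputable def cocycleClass {R : Type u} [CommRing R] (K : CochainComplex (ModuleCat.{u} R) ℕ)
    (n : ℕ) : LinearMap.ker (K.d n (n + 1)).hom →ₗ[R] K.homology n :=
  (K.liftCycles (ModuleCat.ofHom (LinearMap.ker (K.d n (n + 1)).hom).subtype) (n + 1)
    (by simp) (by ext a; exact a.2) ≫ K.homologyπ n).hom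

variable {R : Type u} [CommRing R]

section

variable (K : CochainComplex (ModuleCat.{u} R) ℕ) (n : ℕ)

lemma cocycleClass_eq_homologyπ (c : K.cycles n) (f : LinearMap.ker (K.d n (n + 1)).hom)
    (h : K.iCycles n c = f.1) : cocycleClass K n f = K.homologyπ n c := by
  have hinj : Function.Injective (K.iCycles n) :=
    (ModuleCat.mono_iff_injective _).1 inferInstance
  have : K.liftCycles (ModuleCat.ofHom (LinearMap.ker (K.d n (n + 1)).hom).subtype) (n + 1)
      (by simp) (by ext a; exact a.2) f = c := by
    apply hinj
    rw [h, ← ConcreteCategory.comp_apply, HomologicalComplex.liftCycles_i]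
    rfl
  rw [← this]
  rfl

lemma exists_cycle (f : LinearMap.ker (K.d n (n + 1)).hom) :
    ∃ c : K.cycles n, K.iCycles n c = f.1 := by
  refine ⟨K.liftCycles (ModuleCat.ofHom (LinearMap.ker (K.d n (n + 1)).hom).subtype) (n + 1)
      (by simp) (by ext a; exact a.2) f, ?_⟩
  rw [← ConcreteCategory.comp_apply, HomologicalComplex.liftCycles_i]
  rfl

lemma cocycleClass_surjective : Function.Surjective (cocycleClass K n) := by
  intro h
  obtain ⟨c, rfl⟩ := (ModuleCat.epi_iff_surjective (K.homologyπ n)).1 inferInstance h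
  refine ⟨⟨K.iCycles n c, ?_⟩, cocycleClass_eq_homologyπ K n c _ rfl⟩
  rw [LinearMap.mem_ker]
  change (K.d n (n + 1)) (K.iCycles n c) = 0
  rw [← ConcreteCategory.comp_apply, HomologicalComplex.iCycles_d]
  rfl

lemma cocycleClass_eq_zero_iff (f : LinearMap.ker (K.d n (n + 1)).hom) :
    cocycleClass K n f = 0 ↔ ∃ g : K.X (n - 1), K.d (n - 1) n g = f.1 := by
  have hprev : (ComplexShape.up ℕ).prev n = n - 1 := by
    cases n <;> simp
  obtain ⟨c, hc⟩ := exists_cycle K n f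
  rw [cocycleClass_eq_homologyπ K n c f hc]
  constructor
  · intro h
    have hex : (ShortComplex.mk (K.toCycles (n - 1) n) (K.homologyπ n) (by simp)).Exact :=
      ShortComplex.exact_of_g_is_cokernel _ (K.homologyIsCokernel (n - 1) n hprev)
    rw [ShortComplex.moduleCat_exact_iff] at hex
    obtain ⟨g, hg⟩ := hex c h
    refine ⟨g, ?_⟩
    rw [← hc, ← hg, ← ConcreteCategory.comp_apply, HomologicalComplex.toCycles_i]
  · rintro ⟨g, hg⟩
    have : c = K.toCycles (n - 1) n g := by
      apply (ModuleCat.mono_iff_injective (K.iCycles n)).1 inferInstance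
      rw [hc, ← hg, ← ConcreteCategory.comp_apply, HomologicalComplex.toCycles_i]
    rw [this, ← ConcreteCategory.comp_apply, HomologicalComplex.toCycles_comp_homologyπ]
    rfl

lemma homologyMap_cocycleClass {K L : CochainComplex (ModuleCat.{u} R) ℕ} (φ : K ⟶ L) (n : ℕ)
    (f : LinearMap.ker (K.d n (n + 1)).hom) (g : LinearMap.ker (L.d n (n + 1)).hom)
    (h : φ.f n f.1 = g.1) :
    HomologicalComplex.homologyMap φ n (cocycleClass K n f) = cocycleClass L n g := by
  obtain ⟨c, hc⟩ := exists_cycle K n f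
  rw [cocycleClass_eq_homologyπ K n c f hc,
    cocycleClass_eq_homologyπ L n (HomologicalComplex.cyclesMap φ n c) g]
  · rw [← ConcreteCategory.comp_apply, HomologicalComplex.homologyπ_naturality]
    rfl
  · rw [← ConcreteCategory.comp_apply, HomologicalComplex.cyclesMap_i, ConcreteCategory.comp_apply,
      hc, h]

end

variable {X Y : ModuleCat.{u} R}

/-- Precomposition with a morphism of chain complexes. -/
noncomputable def linearYonedaMap {P Q : ChainComplex (ModuleCat.{u} R) ℕ} (φ : P ⟶ Q)
    (Y : ModuleCat.{u} R) :
    ChainComplex.linearYonedaObj Q R Y ⟶ ChainComplex.linearYonedaObj P R Y :=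
  (HomologicalComplex.unopFunctor _ _).map
    ((((linearYoneda R (ModuleCat.{u} R)).obj Y).rightOp.mapHomologicalComplex _).map φ).op

lemma comp_squares {C : Type*} [Category C] {A B D A' B' D' : C} {a : A ⟶ B} {b : B ⟶ D}
    {a' : A' ⟶ B'} {b' : B' ⟶ D'} {s : A ⟶ A'} {m : B ⟶ B'} {e : D ⟶ D'}
    (h1 : a ≫ m = s ≫ a') (h2 : b ≫ e = m ≫ b') : (a ≫ b) ≫ e = s ≫ a' ≫ b' := by
  rw [Category.assoc, h2, ← Category.assoc, h1, Category.assoc]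

lemma isoExt_inv_naturality {X' X : ModuleCat.{u} R} (q : X' ⟶ X) (P' : ProjectiveResolution X')
    (P : ProjectiveResolution X) (φ : P'.complex ⟶ P.complex)
    (comm : φ.f 0 ≫ P.π.f 0 = P'.π.f 0 ≫ q) (n : ℕ) (Y : ModuleCat.{u} R) :
    (P.isoExt (R := R) n Y).inv ≫ ((Ext R (ModuleCat.{u} R) n).map q.op).app Y =
      HomologicalComplex.homologyMap (linearYonedaMap φ Y) n ≫ (P'.isoExt (R := R) n Y).inv := by
  let F := ((linearYoneda R (ModuleCat.{u} R)).obj Y).rightOp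
  let ψ := (F.mapHomologicalComplex (ComplexShape.down ℕ)).map φ
  have h1 := congrArg Quiver.Hom.unop
    (ProjectiveResolution.isoLeftDerivedObj_hom_naturality q P' P φ comm F n)
  have h2 := congrArg Quiver.Hom.unop
    (HomologicalComplex.homologyOp_hom_naturality (i := n)
      ((HomologicalComplex.unopFunctor _ _).map ψ.op))
  exact comp_squares h2 h1

end OldExt

section OldExtMk

open CategoryTheory Opposite

variable {R : Type u} [CommRing R] {X X' Y : ModuleCat.{u} R} (P : ProjectiveResolution X) {n : ℕ}

/-- A morphism `f : P_n ⟶ Y` with `d ≫ f = 0`, as a cocycle of the complex `Hom(P, Y)`. -/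
def yonedaCocycle (f : P.complex.X n ⟶ Y) (hf : P.complex.d (n + 1) n ≫ f = 0) :
    LinearMap.ker ((P.complex.linearYonedaObj R Y).d n (n + 1)).hom :=
  ⟨f, hf⟩

/-- The class in `Ext` (as a derived functor) of a cocycle of `Hom(P, Y)`. -/
noncomputable def oldExtMk (f : P.complex.X n ⟶ Y) (hf : P.complex.d (n + 1) n ≫ f = 0) :
    ((Ext R (ModuleCat.{u} R) n).obj (op X)).obj Y :=
  (P.isoExt (R := R) n Y).inv.hom (cocycleClass _ n (yonedaCocycle P f hf))

lemma oldExtMk_add (f g : P.complex.X n ⟶ Y) (hf : P.complex.d (n + 1) n ≫ f = 0)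
    (hg : P.complex.d (n + 1) n ≫ g = 0) :
    oldExtMk P (f + g) (by simp [hf, hg]) = oldExtMk P f hf + oldExtMk P g hg := by
  rw [oldExtMk, oldExtMk, oldExtMk, ← map_add, ← map_add]
  rfl

lemma oldExtMk_smul (c : R) (f : P.complex.X n ⟶ Y) (hf : P.complex.d (n + 1) n ≫ f = 0) :
    oldExtMk P (c • f) (by simp [hf]) = c • oldExtMk P f hf := by
  rw [oldExtMk, oldExtMk, ← map_smul, ← map_smul]
  rfl

lemma oldExtMk_surjective (h : ((Ext R (ModuleCat.{u} R) n).obj (op X)).obj Y) :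
    ∃ (f : P.complex.X n ⟶ Y) (hf : P.complex.d (n + 1) n ≫ f = 0), oldExtMk P f hf = h := by
  obtain ⟨h', rfl⟩ := (ModuleCat.epi_iff_surjective (P.isoExt (R := R) n Y).inv).1 inferInstance h
  obtain ⟨⟨f, hf⟩, rfl⟩ := cocycleClass_surjective _ _ h'
  exact ⟨f, hf, rfl⟩

lemma oldExtMk_eq_zero_iff (f : P.complex.X n ⟶ Y) (hf : P.complex.d (n + 1) n ≫ f = 0) :
    oldExtMk P f hf = 0 ↔ ∃ g : P.complex.X (n - 1) ⟶ Y, P.complex.d n (n - 1) ≫ g = f := by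
  have hinj := (ModuleCat.mono_iff_injective (P.isoExt (R := R) n Y).inv).1 inferInstance
  rw [oldExtMk]
  refine (map_eq_zero_iff (P.isoExt (R := R) n Y).inv.hom hinj).trans ?_
  rw [cocycleClass_eq_zero_iff]
  rfl

lemma oldExt_map_oldExtMk (q : X' ⟶ X) (P' : ProjectiveResolution X')
    (φ : ProjectiveResolution.Hom P' P q) (f : P.complex.X n ⟶ Y)
    (hf : P.complex.d (n + 1) n ≫ f = 0) :
    ((Ext R (ModuleCat.{u} R) n).map q.op).app Y (oldExtMk P f hf) =
      oldExtMk P' (φ.hom.f n ≫ f) (by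
        rw [← Category.assoc, ← φ.hom.comm, Category.assoc, hf, Limits.comp_zero]) := by
  have h := isoExt_inv_naturality q P' P φ.hom φ.hom_f_zero_comp_π_f_zero n Y
  have h' := congrArg (fun ψ => ψ.hom (cocycleClass _ n (yonedaCocycle P f hf))) h
  refine h'.trans ?_
  refine congrArg (P'.isoExt (R := R) n Y).inv.hom ?_
  exact homologyMap_cocycleClass (linearYonedaMap φ.hom Y) n _ _ rfl

lemma oldExtMk_eq_iff (f g : P.complex.X n ⟶ Y) (hf : P.complex.d (n + 1) n ≫ f = 0)
    (hg : P.complex.d (n + 1) n ≫ g = 0) :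
    oldExtMk P f hf = oldExtMk P g hg ↔
      ∃ h : P.complex.X (n - 1) ⟶ Y, P.complex.d n (n - 1) ≫ h = f - g := by
  rw [← oldExtMk_eq_zero_iff P (f - g) (by simp [hf, hg]), ← sub_eq_zero]
  have := oldExtMk_add P f ((-1 : R) • g) hf (by simp [hg])
  rw [oldExtMk_smul P _ g hg] at this
  simp only [neg_smul, one_smul, ← sub_eq_add_neg] at this
  rw [← this]

end OldExtMk

section NewExt

open CategoryTheory Opposite Abelian

variable {R : Type u} [CommRing R] {X X' Y : ModuleCat.{u} R}

lemma projExtMk_eq_zero_iff (P : ProjectiveResolution X) {n : ℕ} (f : P.complex.X n ⟶ Y)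
    (hf : P.complex.d (n + 1) n ≫ f = 0) :
    P.extMk f (n + 1) rfl hf = 0 ↔
      ∃ g : P.complex.X (n - 1) ⟶ Y, P.complex.d n (n - 1) ≫ g = f := by
  cases n with
  | succ n => exact P.extMk_eq_zero_iff f _ rfl hf n rfl
  | zero =>
    simp only [← P.extEquivCohomologyClass.apply_eq_iff_eq,
      ProjectiveResolution.extEquivCohomologyClass_extMk,
      ProjectiveResolution.extEquivCohomologyClass_zero,
      CochainComplex.HomComplex.CohomologyClass.mk_eq_zero_iff]
    rw [CochainComplex.HomComplex.Cocycle.toSingleMk_mem_coboundaries_iff _ _ _ _ _ 1 (by simp)]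
    have h0 : ∀ k, P.cochainComplex.d k 1 = 0 := fun k =>
      (CochainComplex.isZero_of_isStrictlyLE _ 0 1 (by lia)).eq_of_tgt _ _
    simp [h0, eq_comm (a := (0 : P.cochainComplex.X 0 ⟶ Y)), eq_comm (b := f)]

/-- For `n = 0` the differential `d (n - 1) n` is zero, so the criterion says `f = 0`. -/
lemma injExtMk_eq_zero_iff (I : InjectiveResolution Y) {n : ℕ} (f : X ⟶ I.cocomplex.X n)
    (hf : f ≫ I.cocomplex.d n (n + 1) = 0) :
    I.extMk f (n + 1) rfl hf = 0 ↔
      ∃ g : X ⟶ I.cocomplex.X (n - 1), g ≫ I.cocomplex.d (n - 1) n = f := by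
  cases n with
  | succ n => exact I.extMk_eq_zero_iff f _ rfl hf n rfl
  | zero =>
    simp only [← I.extEquivCohomologyClass.apply_eq_iff_eq,
      InjectiveResolution.extEquivCohomologyClass_extMk,
      InjectiveResolution.extEquivCohomologyClass_zero,
      CochainComplex.HomComplex.CohomologyClass.mk_eq_zero_iff]
    rw [CochainComplex.HomComplex.Cocycle.fromSingleMk_mem_coboundaries_iff _ _ _ _ _ (-1)
      (by simp)]
    have h0 : ∀ k, I.cochainComplex.d (-1) k = 0 := fun k =>
      (CochainComplex.isZero_of_isStrictlyGE _ 0 (-1) (by lia)).eq_of_src _ _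
    simp [h0, eq_comm (a := (0 : X ⟶ I.cochainComplex.X 0)), eq_comm (b := f)]

/-- Two cocycles on a projective resolution have the same class in the `Ext` of the derived
category exactly when they have the same class in the derived functor `Ext`: both say that they
differ by a coboundary. -/
lemma projExtMk_eq_iff (P : ProjectiveResolution X) {n : ℕ} (f g : P.complex.X n ⟶ Y)
    (hf : P.complex.d (n + 1) n ≫ f = 0) (hg : P.complex.d (n + 1) n ≫ g = 0) :
    P.extMk f (n + 1) rfl hf = P.extMk g (n + 1) rfl hg ↔ oldExtMk P f hf = oldExtMk P g hg := by
  rw [oldExtMk_eq_iff, ← sub_eq_zero, P.sub_extMk, projExtMk_eq_zero_iff]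

variable (I : InjectiveResolution Y) {n : ℕ}

/-- The class in the derived functor `Ext` of a cocycle `z : X ⟶ Iⁿ` with values in an injective
resolution `I`. It is defined through any cocycle on a projective resolution which has the same
class in the `Ext` of the derived category. -/
noncomputable def injExtClass (z : X ⟶ I.cocomplex.X n) (hz : z ≫ I.cocomplex.d n (n + 1) = 0) :
    ((_root_.Ext R (ModuleCat.{u} R) n).obj (op X)).obj Y :=
  oldExtMk (ProjectiveResolution.of X)
    ((ProjectiveResolution.of X).extMk_surjective (I.extMk z (n + 1) rfl hz) (n + 1) rfl).choose
    ((ProjectiveResolution.of X).extMk_surjective (I.extMk z (n + 1) rfl hz) (n + 1)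
      rfl).choose_spec.choose

lemma injExtClass_eq {z : X ⟶ I.cocomplex.X n} {hz : z ≫ I.cocomplex.d n (n + 1) = 0}
    {f : (ProjectiveResolution.of X).complex.X n ⟶ Y}
    (hf : (ProjectiveResolution.of X).complex.d (n + 1) n ≫ f = 0)
    (h : (ProjectiveResolution.of X).extMk f (n + 1) rfl hf = I.extMk z (n + 1) rfl hz) :
    injExtClass I z hz = oldExtMk _ f hf := by
  rw [injExtClass, ← projExtMk_eq_iff, h]
  exact ((ProjectiveResolution.of X).extMk_surjective (I.extMk z (n + 1) rfl hz) (n + 1)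
      rfl).choose_spec.choose_spec

lemma exists_proj_cocycle (z : X ⟶ I.cocomplex.X n) (hz : z ≫ I.cocomplex.d n (n + 1) = 0) :
    ∃ (f : (ProjectiveResolution.of X).complex.X n ⟶ Y)
      (hf : (ProjectiveResolution.of X).complex.d (n + 1) n ≫ f = 0),
      (ProjectiveResolution.of X).extMk f (n + 1) rfl hf = I.extMk z (n + 1) rfl hz :=
  (ProjectiveResolution.of X).extMk_surjective _ _ _

lemma injExtClass_add (z z' : X ⟶ I.cocomplex.X n) (hz : z ≫ I.cocomplex.d n (n + 1) = 0)
    (hz' : z' ≫ I.cocomplex.d n (n + 1) = 0) :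
    injExtClass I (z + z') (by simp [hz, hz']) = injExtClass I z hz + injExtClass I z' hz' := by
  obtain ⟨f, hf, h⟩ := exists_proj_cocycle I z hz
  obtain ⟨f', hf', h'⟩ := exists_proj_cocycle I z' hz'
  rw [injExtClass_eq I hf h, injExtClass_eq I hf' h', ← oldExtMk_add]
  apply injExtClass_eq
  rw [← I.add_extMk z z' _ _ hz hz', ← h, ← h', ProjectiveResolution.add_extMk]

lemma injExtClass_surjective (h : ((_root_.Ext R (ModuleCat.{u} R) n).obj (op X)).obj Y) :
    ∃ (z : X ⟶ I.cocomplex.X n) (hz : z ≫ I.cocomplex.d n (n + 1) = 0),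
      injExtClass I z hz = h := by
  obtain ⟨f, hf, rfl⟩ := oldExtMk_surjective (ProjectiveResolution.of X) h
  obtain ⟨z, hz, h⟩ := I.extMk_surjective ((ProjectiveResolution.of X).extMk f (n + 1) rfl hf)
    (n + 1) rfl
  exact ⟨z, hz, injExtClass_eq I hf h.symm⟩

lemma injExtClass_eq_zero_iff (z : X ⟶ I.cocomplex.X n)
    (hz : z ≫ I.cocomplex.d n (n + 1) = 0) :
    injExtClass I z hz = 0 ↔
      ∃ g : X ⟶ I.cocomplex.X (n - 1), g ≫ I.cocomplex.d (n - 1) n = z := by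
  obtain ⟨f, hf, h⟩ := exists_proj_cocycle I z hz
  rw [injExtClass_eq I hf h, oldExtMk_eq_zero_iff, ← projExtMk_eq_zero_iff _ _ hf, h,
    injExtMk_eq_zero_iff]

lemma oldExt_map_injExtClass (q : X' ⟶ X) (z : X ⟶ I.cocomplex.X n)
    (hz : z ≫ I.cocomplex.d n (n + 1) = 0) :
    ((_root_.Ext R (ModuleCat.{u} R) n).map q.op).app Y (injExtClass I z hz) =
      injExtClass I (q ≫ z) (by simp [hz]) := by
  obtain ⟨f, hf, h⟩ := exists_proj_cocycle I z hz
  let φ : ProjectiveResolution.Hom (ProjectiveResolution.of X') (ProjectiveResolution.of X) q :=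
    ⟨ProjectiveResolution.lift q _ _, ProjectiveResolution.lift_commutes_zero q _ _⟩
  rw [injExtClass_eq I hf h, oldExt_map_oldExtMk _ q _ φ]
  symm
  apply injExtClass_eq
  rw [← I.mk₀_comp_extMk _ _ _ hz, ← h, ProjectiveResolution.mk₀_comp_extMk _ _ _ _ φ]

lemma injExtClass_smul (c : R) (z : X ⟶ I.cocomplex.X n)
    (hz : z ≫ I.cocomplex.d n (n + 1) = 0) :
    injExtClass I (c • z) (by simp [hz]) = c • injExtClass I z hz := by
  obtain ⟨f, hf, h⟩ := exists_proj_cocycle I z hz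
  let φ : ProjectiveResolution.Hom (ProjectiveResolution.of X) (ProjectiveResolution.of X)
    (c • 𝟙 X) := ⟨c • 𝟙 _, by
      ext a
      exact map_smul ((ProjectiveResolution.of X).π.f 0).hom c a⟩
  have h1 := oldExt_map_injExtClass I (c • 𝟙 X) z hz
  simp only [Linear.smul_comp, Category.id_comp] at h1
  rw [← h1, injExtClass_eq I hf h, oldExt_map_oldExtMk _ _ _ φ, ← oldExtMk_smul]
  simp [φ]

end NewExt

/-! ### Local cohomology as torsion cocycles modulo boundaries -/

section Colimit

open CategoryTheory Opposite Limits

variable {R : Type u} [CommRing R] (J : Ideal R) {Y : ModuleCat.{u} R}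

/-- The colimit cocone defining `localCohomology J n`, evaluated at the module `Y`. -/
noncomputable def locCohCocone (n : ℕ) (Y : ModuleCat.{u} R) :
    Cocone (localCohomology.diagram (localCohomology.idealPowersDiagram J) n ⋙
      (evaluation _ _).obj Y) :=
  ((evaluation _ _).obj Y).mapCocone
    (colimit.cocone (localCohomology.diagram (localCohomology.idealPowersDiagram J) n))

/-- `localCohomology J n` evaluated at `Y` is the colimit of the modules `Extⁿ(R/J^t, Y)`. -/
noncomputable def locCohIsColimit (n : ℕ) (Y : ModuleCat.{u} R) :
    IsColimit (locCohCocone J n Y) :=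
  isColimitOfPreserves _ (colimit.isColimit _)

instance preservesColimit_locCoh (n : ℕ) (Y : ModuleCat.{u} R) :
    PreservesColimit (localCohomology.diagram (localCohomology.idealPowersDiagram J) n ⋙
      (evaluation _ _).obj Y) (forget (ModuleCat.{u} R)) := by
  have : PreservesFilteredColimitsOfSize.{0, 0} (forget (ModuleCat.{u} R)) :=
    preservesFilteredColimitsOfSize_shrink.{0, u, 0, u} _
  infer_instance

/-- The canonical surjection `R/J^s ⟶ R/J^t` for `t ≤ s`. -/
def powTrans {s t : ℕ} (h : t ≤ s) : ModuleCat.of R (R ⧸ J ^ s) ⟶ ModuleCat.of R (R ⧸ J ^ t) :=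
  ModuleCat.ofHom (Submodule.mapQ _ _ LinearMap.id (Ideal.pow_le_pow_right h))

variable (I : InjectiveResolution Y) {n : ℕ}

/-- The class in local cohomology of a cocycle `R/J^t ⟶ Iⁿ`. -/
noncomputable def locCohClass {t : ℕ} (z : ModuleCat.of R (R ⧸ J ^ t) ⟶ I.cocomplex.X n)
    (hz : z ≫ I.cocomplex.d n (n + 1) = 0) : (localCohomology J n).obj Y :=
  ((locCohCocone J n Y).ι.app (op (op t))).hom (injExtClass I z hz)

lemma locCohClass_surjective (h : (localCohomology J n).obj Y) :
    ∃ (t : ℕ) (z : ModuleCat.of R (R ⧸ J ^ t) ⟶ I.cocomplex.X n)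
      (hz : z ≫ I.cocomplex.d n (n + 1) = 0), locCohClass J I z hz = h := by
  obtain ⟨j, y, hy⟩ := Concrete.isColimit_exists_rep _ (locCohIsColimit J n Y) h
  obtain ⟨z, hz, rfl⟩ := injExtClass_surjective I
    (X := ModuleCat.of R (R ⧸ J ^ j.unop.unop)) y
  exact ⟨j.unop.unop, z, hz, hy⟩

lemma locCohClass_smul {t : ℕ} (c : R) (z : ModuleCat.of R (R ⧸ J ^ t) ⟶ I.cocomplex.X n)
    (hz : z ≫ I.cocomplex.d n (n + 1) = 0) (hz' : (c • z) ≫ I.cocomplex.d n (n + 1) = 0) :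
    locCohClass J I (c • z) hz' = c • locCohClass J I z hz := by
  refine (congrArg ((locCohCocone J n Y).ι.app (op (op t))).hom
    (injExtClass_smul I c z hz)).trans ?_
  exact map_smul ((locCohCocone J n Y).ι.app (op (op t))).hom c _

lemma locCohClass_eq_zero_iff {t : ℕ} (z : ModuleCat.of R (R ⧸ J ^ t) ⟶ I.cocomplex.X n)
    (hz : z ≫ I.cocomplex.d n (n + 1) = 0) :
    locCohClass J I z hz = 0 ↔ ∃ (s : ℕ) (h : t ≤ s)
      (g : ModuleCat.of R (R ⧸ J ^ s) ⟶ I.cocomplex.X (n - 1)),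
      g ≫ I.cocomplex.d (n - 1) n = powTrans J h ≫ z := by
  have key : ∀ {s : ℕ} (h : t ≤ s),
      ((localCohomology.diagram (localCohomology.idealPowersDiagram J) n ⋙
      (evaluation _ _).obj Y).map (homOfLE h).op.op) (injExtClass I z hz) =
      injExtClass I (powTrans J h ≫ z) (by rw [Category.assoc, hz, comp_zero]) := fun h =>
    oldExt_map_injExtClass I (powTrans J h) z hz
  constructor
  · intro h0
    have h1 : (locCohCocone J n Y).ι.app (op (op t)) (injExtClass I z hz) =
        (locCohCocone J n Y).ι.app (op (op t)) 0 := h0.trans (map_zero _).symm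
    obtain ⟨k, f, g, hfg⟩ := Concrete.isColimit_exists_of_rep_eq _ (locCohIsColimit J n Y) _ _ h1
    have h : t ≤ k.unop.unop := leOfHom f.unop.unop
    refine ⟨k.unop.unop, h, ?_⟩
    rw [← injExtClass_eq_zero_iff I _ (by rw [Category.assoc, hz, comp_zero]), ← key h]
    exact hfg.trans (map_zero _)
  · rintro ⟨s, h, g, hg⟩
    have h1 : injExtClass I (powTrans J h ≫ z) (by rw [Category.assoc, hz, comp_zero]) = 0 :=
      (injExtClass_eq_zero_iff I _ _).2 ⟨g, hg⟩
    rw [← key h] at h1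
    unfold locCohClass
    rw [← (locCohCocone J n Y).w (homOfLE h).op.op]
    exact (congrArg ((locCohCocone J n Y).ι.app (op (op s))).hom h1).trans (map_zero _)

/-- The morphism `R/K ⟶ E` which sends `1` to an element killed by `K`. -/
def homOfKilled (K : Ideal R) {E : ModuleCat.{u} R} (z : E) (hz : ∀ a ∈ K, a • z = 0) :
    ModuleCat.of R (R ⧸ K) ⟶ E :=
  ModuleCat.ofHom (Submodule.liftQ K (LinearMap.toSpanSingleton R E z) hz)

lemma homOfKilled_mk (K : Ideal R) {E : ModuleCat.{u} R} (z : E) (hz : ∀ a ∈ K, a • z = 0)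
    (a : R) : (homOfKilled K z hz).hom (Submodule.Quotient.mk a) = a • z := rfl

lemma quotHom_ext {K : Ideal R} {E : ModuleCat.{u} R} {f g : ModuleCat.of R (R ⧸ K) ⟶ E}
    (h : f.hom (Submodule.Quotient.mk (1 : R)) = g.hom (Submodule.Quotient.mk (1 : R))) :
    f = g := by
  refine ModuleCat.hom_ext (LinearMap.ext fun y => ?_)
  obtain ⟨a, rfl⟩ := Submodule.Quotient.mk_surjective _ y
  have : (Submodule.Quotient.mk a : R ⧸ K) = a • Submodule.Quotient.mk (1 : R) := by
    rw [← Submodule.Quotient.mk_smul, smul_eq_mul, mul_one]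
  rw [this]
  exact (map_smul f.hom a _).trans ((congrArg (a • ·) h).trans (map_smul g.hom a _).symm)

/-- `IsClass J I z h`: the cocycle `z ∈ Iⁿ`, killed by a power of `J`, represents the element `h`
of local cohomology. -/
def IsClass (z : I.cocomplex.X n) (h : (localCohomology J n).obj Y) : Prop :=
  ∃ (t : ℕ) (hz : ∀ a ∈ J ^ t, a • z = 0)
    (hd : homOfKilled (J ^ t) z hz ≫ I.cocomplex.d n (n + 1) = 0),
    locCohClass J I (homOfKilled (J ^ t) z hz) hd = h

lemma exists_isClass_of_elt (h : (localCohomology J n).obj Y) :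
    ∃ z : I.cocomplex.X n, (∃ t, ∀ a ∈ J ^ t, a • z = 0) ∧ I.cocomplex.d n (n + 1) z = 0 ∧
      IsClass J I z h := by
  obtain ⟨t, f, hf, rfl⟩ := locCohClass_surjective J I h
  have hk : ∀ a ∈ J ^ t, a • f.hom (Submodule.Quotient.mk (1 : R)) = 0 := by
    intro a ha
    rw [← map_smul, ← Submodule.Quotient.mk_smul, smul_eq_mul, mul_one,
      (Submodule.Quotient.mk_eq_zero _).2 ha, map_zero]
  have he : homOfKilled (J ^ t) (f.hom (Submodule.Quotient.mk (1 : R))) hk = f := by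
    apply quotHom_ext
    rw [homOfKilled_mk, one_smul]
  refine ⟨_, ⟨t, hk⟩, ?_, t, hk, ?_, ?_⟩
  · exact congrArg (fun φ => φ.hom (Submodule.Quotient.mk (1 : R))) hf
  · rw [he, hf]
  · congr 1

lemma exists_isClass {z : I.cocomplex.X n} (hz : ∃ t, ∀ a ∈ J ^ t, a • z = 0)
    (hd : I.cocomplex.d n (n + 1) z = 0) : ∃ h, IsClass J I z h := by
  obtain ⟨t, ht⟩ := hz
  refine ⟨_, t, ht, ?_, rfl⟩
  apply quotHom_ext
  change I.cocomplex.d n (n + 1) ((1 : R) • z) = 0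
  rw [one_smul, hd]

variable {J I}

lemma IsClass.smul {z : I.cocomplex.X n} {h : (localCohomology J n).obj Y} (hz : IsClass J I z h)
    (c : R) : IsClass J I (c • z) (c • h) := by
  obtain ⟨t, hk, hd, rfl⟩ := hz
  have hk' : ∀ a ∈ J ^ t, a • c • z = 0 := fun a ha => by rw [smul_comm, hk a ha, smul_zero]
  have he : homOfKilled (J ^ t) (c • z) hk' = c • homOfKilled (J ^ t) z hk := by
    apply quotHom_ext
    rw [homOfKilled_mk, one_smul, ModuleCat.hom_smul, LinearMap.smul_apply, homOfKilled_mk,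
      one_smul]
  have hd' : (c • homOfKilled (J ^ t) z hk) ≫ I.cocomplex.d n (n + 1) = 0 := by
    rw [Linear.smul_comp, hd, smul_zero]
  refine ⟨t, hk', by rw [he, hd'], ?_⟩
  rw [← locCohClass_smul J I c _ hd hd']
  congr 1

lemma IsClass.eq_zero_iff {z : I.cocomplex.X n} {h : (localCohomology J n).obj Y}
    (hz : IsClass J I z h) : h = 0 ↔ ∃ e : I.cocomplex.X (n - 1), (∃ s, ∀ a ∈ J ^ s, a • e = 0) ∧
      I.cocomplex.d (n - 1) n e = z := by
  obtain ⟨t, hk, hd, rfl⟩ := hz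
  rw [locCohClass_eq_zero_iff]
  constructor
  · rintro ⟨s, hs, g, hg⟩
    refine ⟨g.hom (Submodule.Quotient.mk (1 : R)), ⟨s, fun a ha => ?_⟩, ?_⟩
    · rw [← map_smul, ← Submodule.Quotient.mk_smul, smul_eq_mul, mul_one,
        (Submodule.Quotient.mk_eq_zero _).2 ha, map_zero]
    · exact (congrArg (fun φ => φ.hom (Submodule.Quotient.mk (1 : R))) hg).trans (one_smul R z)
  · rintro ⟨e, ⟨s, hs⟩, he⟩
    refine ⟨s + t, Nat.le_add_left _ _, homOfKilled _ e
      (fun a ha => hs a (Ideal.pow_le_pow_right (Nat.le_add_right _ _) ha)), ?_⟩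
    apply quotHom_ext
    change I.cocomplex.d (n - 1) n ((1 : R) • e) = (1 : R) • z
    rw [one_smul, one_smul, he]

end Colimit

section Resolution

open CategoryTheory Limits

variable {R : Type u} [CommRing R] {M : Type u} [AddCommGroup M] [Module R M]
  (I : InjectiveResolution (ModuleCat.of R M))

/-- The terms of a categorical injective resolution, as an injective resolution by modules. -/
noncomputable def InjRes.ofResolution : InjRes R M (fun i => I.cocomplex.X i) where
  ι := (I.ι.f 0).hom
  d i := (I.cocomplex.d i (i + 1)).hom
  ι_inj := (ModuleCat.mono_iff_injective (I.ι.f 0)).1 inferInstance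
  d_ι m := congrArg (fun φ => φ.hom m) I.ι_f_zero_comp_complex_d
  exact_zero z hz := by
    obtain ⟨l, hl⟩ := KernelFork.IsLimit.lift' I.isLimitKernelFork
      (ModuleCat.ofHom (LinearMap.toSpanSingleton R (I.cocomplex.X 0) z)) (by
        refine ModuleCat.hom_ext (LinearMap.ext fun a => ?_)
        exact (map_smul (I.cocomplex.d 0 1).hom a z).trans
          ((congrArg (a • ·) hz).trans (smul_zero a)))
    exact ⟨l.hom (1 : R), (congrArg (fun φ => φ.hom (1 : R)) hl).trans (one_smul R z)⟩
  d_d i e := congrArg (fun φ => φ.hom e) (I.cocomplex.d_comp_d i (i + 1) (i + 2))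
  exact_succ i z hz := (ShortComplex.moduleCat_exact_iff _).1 (I.exact_succ i) z hz
  inj i := by
    have : Injective (ModuleCat.of R (I.cocomplex.X i)) := I.injective i
    exact Module.injective_module_of_injective_object R (I.cocomplex.X i)

end Resolution

section Torsion

variable {R : Type u} [CommRing R] {d : ℕ} (x : Fin d → R)

/-- A finite sequence, extended by zero. -/
def extSeq (i : ℕ) : R := if h : i < d then x ⟨i, h⟩ else 0

lemma extSeq_fin (i : Fin d) : extSeq x i = x i := by
  simp [extSeq]

lemma mem_torsSub_extSeq [IsNoetherianRing R] {E : Type*} [AddCommGroup E] [Module R E] {e : E} :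
    e ∈ torsSub (extSeq x) d E ↔ ∃ t : ℕ, ∀ a ∈ Ideal.span (Set.range x) ^ t, a • e = 0 := by
  rw [mem_torsSub]
  constructor
  · intro h
    obtain ⟨t, ht⟩ := Ideal.exists_pow_le_of_le_radical_of_fg
      (I := Ideal.span (Set.range x)) (J := LinearMap.ker (LinearMap.toSpanSingleton R E e)) (by
        rw [Ideal.span_le]
        rintro _ ⟨i, rfl⟩
        obtain ⟨t, ht⟩ := h i i.2
        rw [extSeq_fin] at ht
        exact ⟨t, ht⟩) (IsNoetherian.noetherian _)
    exact ⟨t, fun a ha => ht ha⟩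
  · rintro ⟨t, ht⟩ i hi
    refine ⟨t, ht _ (Ideal.pow_mem_pow ?_ t)⟩
    exact Ideal.subset_span ⟨⟨i, hi⟩, (extSeq_fin x ⟨i, hi⟩).symm⟩

end Torsion

section Bridge

open CategoryTheory

variable {R : Type u} [CommRing R] [IsNoetherianRing R] {M : Type u} [AddCommGroup M] [Module R M]
  {d : ℕ} (x : Fin d → R) (I : InjectiveResolution (ModuleCat.of R M))

lemma mem_bdry_ofResolution {n : ℕ} (z : I.cocomplex.X n) :
    z ∈ (InjRes.ofResolution I).bdry (extSeq x) d n ↔ ∃ e : I.cocomplex.X (n - 1),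
      (∃ s, ∀ a ∈ Ideal.span (Set.range x) ^ s, a • e = 0) ∧ I.cocomplex.d (n - 1) n e = z := by
  cases n with
  | zero =>
    have h0 : I.cocomplex.d (0 - 1) 0 = 0 := I.cocomplex.shape _ _ (by simp)
    constructor
    · intro h
      obtain rfl : z = 0 := h
      exact ⟨0, ⟨0, fun a _ => smul_zero a⟩, map_zero _⟩
    · rintro ⟨e, -, rfl⟩
      rw [h0]
      exact zero_mem _
  | succ n =>
    constructor
    · rintro ⟨e, he, rfl⟩
      exact ⟨e, (mem_torsSub_extSeq x).1 he, rfl⟩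
    · rintro ⟨e, he, rfl⟩
      exact ⟨e, (mem_torsSub_extSeq x).2 he, rfl⟩

variable (M) in
/-- Local cohomology is the direct limit of the modules `M / (x₀ⁿ, …, x_{d-1}ⁿ) M`; this records
what the identification says about vanishing. -/
lemma subsingleton_localCohomology_iff :
    Subsingleton ((localCohomology (Ideal.span (Set.range x)) d).obj (ModuleCat.of R M)) ↔
      ∀ (n : ℕ) (m : M), m ∈ limSub (extSeq x) M d n := by
  let I := InjectiveResolution.of (ModuleCat.of R M)
  have G := (InjRes.ofResolution I).good (extSeq x) d
  constructor
  · intro hs n m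
    obtain ⟨z, hz⟩ := G.total n m
    obtain ⟨ht, hd⟩ := G.cocycle hz
    obtain ⟨h, hh⟩ := exists_isClass (Ideal.span (Set.range x)) I
      ((mem_torsSub_extSeq x).1 ht) hd
    rw [← G.zero_iff hz]
    exact (mem_bdry_ofResolution x I z).2 (hh.eq_zero_iff.1 (Subsingleton.elim _ _))
  · intro hl
    refine subsingleton_of_forall_eq 0 fun h => ?_
    obtain ⟨z, ht, hd, hh⟩ := exists_isClass_of_elt (Ideal.span (Set.range x)) I h
    rw [hh.eq_zero_iff, ← mem_bdry_ofResolution x I z]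
    obtain ⟨n, m, z', hz', hb⟩ := G.surj z ((mem_torsSub_extSeq x).2 ht) hd
    have := add_mem hb ((G.zero_iff hz').2 (hl n m))
    rwa [sub_add_cancel] at this

/-- An element which kills local cohomology kills the images of all `M / (x₀ⁿ, …, x_{d-1}ⁿ) M`
in it. -/
lemma smul_mem_limSub_of_mem_annihilator {a : R} (ha : a ∈ Module.annihilator R
      ((localCohomology (Ideal.span (Set.range x)) d).obj (ModuleCat.of R M))) (n : ℕ) (m : M) :
    a • m ∈ limSub (extSeq x) M d n := by
  let I := InjectiveResolution.of (ModuleCat.of R M)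
  have G := (InjRes.ofResolution I).good (extSeq x) d
  obtain ⟨z, hz⟩ := G.total n m
  obtain ⟨ht, hd⟩ := G.cocycle hz
  obtain ⟨h, hh⟩ := exists_isClass (Ideal.span (Set.range x)) I ((mem_torsSub_extSeq x).1 ht) hd
  rw [← G.zero_iff (G.smul a hz)]
  exact (mem_bdry_ofResolution x I (a • z)).2
    ((hh.smul a).eq_zero_iff.1 (Module.mem_annihilator.1 ha h))

end Bridge

/-! ### Limit closures -/

section LimitClosure

variable {R : Type u} [CommRing R] {M : Type u} [AddCommGroup M] [Module R M]
  {d : ℕ} (x : Fin d → R)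

lemma seqProd_extSeq : seqProd (extSeq x) d = ∏ i, x i := by
  rw [seqProd, Finset.prod_range]
  exact Finset.prod_congr rfl fun i _ => extSeq_fin x i

lemma powSub_extSeq (n : ℕ) :
    powSub M (extSeq x) d n =
      Ideal.span (Set.range fun i => x i ^ n) • (⊤ : Submodule R M) := by
  rw [powSub_eq_span_smul]
  congr 2
  ext y
  constructor
  · rintro ⟨i, hi, rfl⟩
    exact ⟨⟨i, hi⟩, congrArg (· ^ n) (extSeq_fin x ⟨i, hi⟩).symm⟩
  · rintro ⟨i, rfl⟩
    exact ⟨i, i.2, by simp only [extSeq_fin]⟩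

/-- With `P = ∏ xᵢ`, the `k`-th colon module in the limit closure of the `xᵢ^(n+1)` is that of
`P ^ ((n+1)(k+1))` into the submodule of exponent `(n+1)(k+2) = (n+1) + (n+1)(k+1)`. -/
lemma limitClosure_pow_eq_limSub (n : ℕ) :
    limitClosure (M := M) (fun i => x i ^ (n + 1)) = limSub (extSeq x) M d (n + 1) := by
  have hP : ∀ k : ℕ, (∏ i, x i ^ (n + 1)) ^ (k + 1) =
      seqProd (extSeq x) d ^ ((n + 1) * (k + 1)) := fun k => by
    rw [Finset.prod_pow, seqProd_extSeq, pow_mul]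
  have hS : ∀ k : ℕ, Ideal.span (Set.range fun i => (x i ^ (n + 1)) ^ (k + 2)) •
      (⊤ : Submodule R M) = powSub M (extSeq x) d (n + 1 + (n + 1) * (k + 1)) := fun k => by
    simp_rw [← pow_mul]
    rw [powSub_extSeq, show n + 1 + (n + 1) * (k + 1) = (n + 1) * (k + 2) by ring]
  unfold limitClosure
  simp only [hP, hS]
  apply le_antisymm
  · exact iSup_le fun k m hm => ⟨_, hm⟩
  · rintro m ⟨k, hk⟩
    refine Submodule.mem_iSup_of_mem k ?_
    have hle : k ≤ (n + 1) * (k + 1) := by nlinarith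
    obtain ⟨l, hl⟩ := Nat.exists_eq_add_of_le hle
    have := seqProd_smul_mem (extSeq x) l hk
    rw [smul_smul, ← pow_add, add_assoc, add_comm l k, ← hl] at this
    exact this

end LimitClosure

/-- Let `R` be Noetherian, `M` a finitely generated `R`-module of dimension `d`, and
`x = x₁, …, x_d` a sequence of `d` elements of `R`.  The following are equivalent:
(i) `H^d_{(x)}(M) = 0`; (ii) `⋂_{n ≥ 1} (x₁^n, …, x_d^n)^lim_M = M`;
(iii) `dim R/Ann H^d_{(x)}(M) < d`. -/
theorem localCohomology_vanishing_tfae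
    {R : Type u} [CommRing R] [IsNoetherianRing R]
    {M : Type u} [AddCommGroup M] [Module R M] [Module.Finite R M]
    {d : ℕ} (hd : moduleDim R M = d) (x : Fin d → R) :
    (Subsingleton ((localCohomology (Ideal.span (Set.range x)) d).obj (ModuleCat.of R M)) ↔
        (⨅ n : ℕ, limitClosure (M := M) (fun i => x i ^ (n + 1))) = ⊤) ∧
    (Subsingleton ((localCohomology (Ideal.span (Set.range x)) d).obj (ModuleCat.of R M)) ↔
        moduleDim R ((localCohomology (Ideal.span (Set.range x)) d).obj (ModuleCat.of R M))
          < (d : WithBot ℕ∞)) := by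
  have hiff := subsingleton_localCohomology_iff M x
  refine ⟨hiff.trans ⟨fun h => ?_, fun h n m => ?_⟩, fun h => ?_, fun h => ?_⟩
  · simp only [limitClosure_pow_eq_limSub]
    exact eq_top_iff.2 fun m _ => (Submodule.mem_iInf _).2 fun n => h _ m
  · simp only [limitClosure_pow_eq_limSub] at h
    -- exponent `0` is covered too, since exponent `n + 1` gives a smaller submodule
    have hm : m ∈ limSub (extSeq x) M d (n + 1) :=
      (Submodule.mem_iInf _).1 (h ▸ Submodule.mem_top) n
    obtain ⟨k, hk⟩ := hm
    exact ⟨k, powSub_anti _ (by omega) hk⟩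
  · have : Subsingleton (R ⧸ Module.annihilator R
        ((localCohomology (Ideal.span (Set.range x)) d).obj (ModuleCat.of R M))) := by
      rw [Module.annihilator_eq_top_iff.2 h]
      infer_instance
    rw [moduleDim, ringKrullDim_eq_bot_of_subsingleton]
    exact WithBot.bot_lt_coe _
  · refine hiff.2 fun n m => ?_
    obtain ⟨k, hk⟩ := limSub_eq_top_of_dim_lt (extSeq x) d _ h
      (fun n a ha m => smul_mem_limSub_of_mem_annihilator x ha n m) n m
    exact ⟨k, powSub_anti _ (by omega) hk⟩
end

section
/- Let (R, m) be a Noetherian local ring and M a finitely generated R-module of dimension d. Then Ann(H^d_m(M)) = Ann(M/U_M(0)) = {r ∈ R : dim M/(0 :_M r) < d}. In particular, H^d_m(M) ≠ 0. -/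
/-!
All conditions on `r` are equivalent to `dim rM < d`. For `Ann (M/U)` this is the maximality of `U`,
and for `dim M/(0 :_M r)` it is the isomorphism `M/(0 :_M r) ≅ rM`. The content is that `r` kills
`H^d_m(M)` iff `dim rM < d` (`TopLC.kills_iff`), for `M` finite of dimension at most `d`. Taking
`r = 1` gives nonvanishing.

If `dim rM < d`, multiplication by `r` on `M` factors through `rM`, and `H^d_m(rM) = 0` by
Grothendieck vanishing.

Conversely let `r` kill `H^d_m(M)`; the proof is by induction on `d` and needs neither completion
nor duality. For `d = 0` the module is its own `H^0_m`. For larger `d`, dividing by the `m`-torsion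
`L` of `M` changes neither the hypothesis (`H^i_m(L) = 0` for `i > 0`, by Artin-Rees) nor the
nonmaximal support of `rM`, so let `M` have positive depth. Put `H = H^{d-1}_m(M)`. It is Artinian,
so prime avoidance provides an `M`-regular `x ∈ m` for which all the `x^k H` contain a fixed
`m^s H` (`TopLC.exists_primes_of_isArtinian`). For `w ∈ H^{d-1}_m(M/x^k M)`, the element `r w` maps
to `0` in `H^d_m(M)`, hence comes from some `v ∈ H`; for `a ∈ m^s`, the element `a v` lies in
`x^k H`, so `a r w = 0`. By induction `dim ar(M/x^k M) < d - 1` for all `k`. By Artin-Rees, for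
large `k` the module `arM/x arM` has support inside that of `ar(M/x^k M)`, whence `dim arM < d` for
all `a ∈ m^s`, and then `dim rM < d`.

The argument needs long exact sequences, which are available for `Ext` computed in the derived
category. It is therefore carried out for `TopLC.LC`, the direct limit of these `Ext^n(R ⧸ m^t, M)`.
The two notions of local cohomology are compared through cocycles on projective resolutions
(`TopLC.BoundaryCriterion`).
-/

open IsLocalRing

universe u

namespace TopLC

open CategoryTheory Abelian

/-! ### Local cohomology from derived category `Ext` -/

section LC

variable {R : Type u} [CommRing R] (I : Ideal R)

/-- The quotient `R ⧸ I ^ t`, as an object of the category of `R`-modules. -/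
noncomputable abbrev Q (t : ℕ) : ModuleCat.{u} R := ModuleCat.of R (R ⧸ I ^ t)

/-- The canonical projection `R ⧸ I ^ t' → R ⧸ I ^ t` for `t ≤ t'`. -/
noncomputable def proj {t t' : ℕ} (h : t ≤ t') : Q I t' ⟶ Q I t :=
  ModuleCat.ofHom (Submodule.mapQ _ _ LinearMap.id (Ideal.pow_le_pow_right h))

lemma proj_refl (t : ℕ) : proj I (le_refl t) = 𝟙 _ := by
  ext; rfl

lemma proj_comp {t t' t'' : ℕ} (h : t ≤ t') (h' : t' ≤ t'') :
    proj I h' ≫ proj I h = proj I (h.trans h') := by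
  ext; rfl

variable (n : ℕ) (M N K : ModuleCat.{u} R)

/-- The transition map `Ext^n(R ⧸ I ^ t, M) → Ext^n(R ⧸ I ^ t', M)`. -/
noncomputable def trans (t t' : ℕ) (h : t ≤ t') : Ext (Q I t) M n →ₗ[R] Ext (Q I t') M n :=
  (Ext.mk₀ (proj I h)).precompOfLinear R M (zero_add n)

lemma trans_apply {t t' : ℕ} (h : t ≤ t') (α : Ext (Q I t) M n) :
    trans I n M t t' h α = (Ext.mk₀ (proj I h)).comp α (zero_add n) := rfl

instance : DirectedSystem (fun t : ℕ => Ext (Q I t) M n) (fun t t' h => trans I n M t t' h) where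
  map_self t α := by rw [trans_apply, proj_refl, Ext.mk₀_id_comp]
  map_map t t' t'' h h' α := by
    simp only [trans_apply, Ext.mk₀_comp_mk₀_assoc, proj_comp]

/-- Local cohomology modelled as the direct limit of the groups `Ext^n(R ⧸ I ^ t, M)`, where `Ext`
is computed in the derived category, so that its long exact sequences are available. -/
abbrev LC : Type u := Module.DirectLimit (fun t : ℕ => Ext (Q I t) M n) (trans I n M)

/-- The class in `LC I n M` of an element of `Ext^n(R ⧸ I ^ t, M)`. -/
noncomputable abbrev LC.of (t : ℕ) : Ext (Q I t) M n →ₗ[R] LC I n M :=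
  Module.DirectLimit.of R ℕ _ (trans I n M) t

variable {M N K}

/-- Functoriality of `LC` in the module, allowing a shift of degree by an `Ext` class. -/
noncomputable def LC.post {n k n' : ℕ} (β : Ext M N k) (h : n + k = n') :
    LC I n M →ₗ[R] LC I n' N :=
  Module.DirectLimit.map (fun t => β.postcompOfLinear R (Q I t) h) (by
    intro i j hij
    ext α
    exact Ext.comp_assoc _ _ _ (zero_add n) h (by omega))

lemma LC.post_of {n k n' : ℕ} (β : Ext M N k) (h : n + k = n') (t : ℕ) (α : Ext (Q I t) M n) :
    LC.post I β h (LC.of I n M t α) = LC.of I n' N t (α.comp β h) :=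
  Module.DirectLimit.map_apply_of _ _ _

/-- The map on `LC` induced by a linear map. -/
noncomputable def LC.map (f : M ⟶ N) : LC I n M →ₗ[R] LC I n N := LC.post I (Ext.mk₀ f) (add_zero n)

lemma LC.map_of (f : M ⟶ N) (t : ℕ) (α : Ext (Q I t) M n) :
    LC.map I n f (LC.of I n M t α) = LC.of I n N t (α.comp (Ext.mk₀ f) (add_zero n)) :=
  LC.post_of I _ _ _ _

lemma LC.map_map (f : M ⟶ N) (g : N ⟶ K) (x : LC I n M) :
    LC.map I n g (LC.map I n f x) = LC.map I n (f ≫ g) x := by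
  obtain ⟨t, α, rfl⟩ := Module.DirectLimit.exists_of x
  simp [LC.map_of]

lemma LC.map_smul_id (r : R) (x : LC I n M) : LC.map I n (r • 𝟙 M) x = r • x := by
  obtain ⟨t, α, rfl⟩ := Module.DirectLimit.exists_of x
  rw [LC.map_of, ← Ext.smul_eq_comp_mk₀, map_smul]

variable {S : ShortComplex (ModuleCat.{u} R)} (hS : S.ShortExact)

/-- The connecting map of the long exact sequence. -/
noncomputable def LC.δ : LC I n S.X₃ →ₗ[R] LC I (n + 1) S.X₁ := LC.post I hS.extClass rfl

lemma LC.δ_of (t : ℕ) (α : Ext (Q I t) S.X₃ n) :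
    LC.δ I n hS (LC.of I n _ t α) = LC.of I (n + 1) _ t (α.comp hS.extClass rfl) :=
  LC.post_of I _ _ _ _

/-- Exactness at the middle term; together with `LC.exact₃` and `LC.exact₁`, the long exact sequence
of local cohomology. -/
lemma LC.exact₂ (hS : S.ShortExact) (x : LC I n S.X₂) (hx : LC.map I n S.g x = 0) :
    ∃ y, LC.map I n S.f y = x := by
  obtain ⟨t, α, rfl⟩ := Module.DirectLimit.exists_of x
  rw [LC.map_of] at hx
  obtain ⟨t', h, h0⟩ := Module.DirectLimit.of.zero_exact hx
  rw [trans_apply, ← Ext.comp_assoc _ _ _ (zero_add n) (add_zero n) (by omega)] at h0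
  obtain ⟨β, hβ⟩ := Ext.covariant_sequence_exact₂ _ hS _ h0
  refine ⟨LC.of I n _ t' β, ?_⟩
  rw [LC.map_of, hβ]
  exact Module.DirectLimit.of_f (f := trans I n S.X₂) (hij := h)

lemma LC.exact₃ (x : LC I n S.X₃) (hx : LC.δ I n hS x = 0) :
    ∃ y, LC.map I n S.g y = x := by
  obtain ⟨t, α, rfl⟩ := Module.DirectLimit.exists_of x
  rw [LC.δ_of] at hx
  obtain ⟨t', h, h0⟩ := Module.DirectLimit.of.zero_exact hx
  rw [trans_apply, ← Ext.comp_assoc _ _ _ (zero_add n) rfl (by omega)] at h0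
  obtain ⟨β, hβ⟩ := Ext.covariant_sequence_exact₃ _ hS _ rfl h0
  refine ⟨LC.of I n _ t' β, ?_⟩
  rw [LC.map_of, hβ]
  exact Module.DirectLimit.of_f (f := trans I n S.X₃) (hij := h)

lemma LC.exact₁ (x : LC I (n + 1) S.X₁) (hx : LC.map I (n + 1) S.f x = 0) :
    ∃ y, LC.δ I n hS y = x := by
  obtain ⟨t, α, rfl⟩ := Module.DirectLimit.exists_of x
  rw [LC.map_of] at hx
  obtain ⟨t', h, h0⟩ := Module.DirectLimit.of.zero_exact hx
  rw [trans_apply, ← Ext.comp_assoc _ _ _ (zero_add _) (add_zero _) (by omega)] at h0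
  obtain ⟨β, hβ⟩ := Ext.covariant_sequence_exact₁ _ hS _ h0 rfl
  refine ⟨LC.of I n _ t' β, ?_⟩
  rw [LC.δ_of, hβ]
  exact Module.DirectLimit.of_f (f := trans I (n + 1) S.X₁) (hij := h)

lemma LC.map_f_map_g (x : LC I n S.X₁) : LC.map I n S.g (LC.map I n S.f x) = 0 := by
  obtain ⟨t, α, rfl⟩ := Module.DirectLimit.exists_of x
  simp [LC.map_of]

lemma LC.exists_pow_smul_eq_zero (x : LC I n M) : ∃ t : ℕ, ∀ a ∈ I ^ t, a • x = 0 := by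
  obtain ⟨t, α, rfl⟩ := Module.DirectLimit.exists_of x
  refine ⟨t, fun a ha => ?_⟩
  have h0 : a • (𝟙 (Q I t)) = 0 := by
    ext
    change a • (Submodule.Quotient.mk 1 : R ⧸ I ^ t) = 0
    rw [← Submodule.Quotient.mk_smul, Submodule.Quotient.mk_eq_zero]
    simpa using ha
  have : a • α = 0 := by
    rw [← Ext.mk₀_id_comp α, ← Ext.smul_comp, ← Ext.mk₀_smul, h0]
    simp
  rw [← map_smul, this, map_zero]

lemma LC.subsingleton_of_subsingleton [Subsingleton M] : Subsingleton (LC I n M) := by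
  refine ⟨fun x y => ?_⟩
  have : ∀ x : LC I n M, x = 0 := fun x => by
    have h := LC.map_smul_id I n (1 : R) x
    have h0 : (1 : R) • 𝟙 M = 0 := by ext; exact Subsingleton.elim _ _
    obtain ⟨t, α, rfl⟩ := Module.DirectLimit.exists_of x
    rw [h0, one_smul, LC.map_of] at h
    simpa using h.symm
  rw [this x, this y]

end LC

/-! ### Vanishing for modules killed by a power of the ideal -/

section Effaceable

variable {R : Type u} [CommRing R] [IsNoetherianRing R] (I : Ideal R)

/-- An `Ext` class with coefficients in a module `L` killed by a power of `I` vanishes after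
restriction to `I ^ t X` for large `t`. Dimension shifting along `0 → K → F → X → 0` with `F` free
reduces the degree, the Artin-Rees lemma comparing `K ∩ I ^ t F` with the `I`-adic filtration of
`K`. -/
lemma exists_restrict_eq_zero (L : ModuleCat.{u} R) (s : ℕ) (hL : ∀ a ∈ I ^ s, ∀ y : L, a • y = 0)
    (j : ℕ) : ∀ (X : Type u) [AddCommGroup X] [Module R X] [Module.Finite R X]
      (α : Ext (ModuleCat.of R X) L j), ∃ t : ℕ,
      (Ext.mk₀ (ModuleCat.ofHom (I ^ t • (⊤ : Submodule R X)).subtype)).comp α (zero_add j) = 0 := by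
  induction j with
  | zero =>
    intro X _ _ _ α
    obtain ⟨f, rfl⟩ := Ext.mk₀_bijective _ _ |>.surjective α
    refine ⟨s, ?_⟩
    rw [Ext.mk₀_comp_mk₀, Ext.mk₀_eq_zero_iff]
    ext ⟨y, hy⟩
    change f.hom y = 0
    refine Submodule.smul_induction_on hy ?_ ?_
    · intro a ha z _
      rw [map_smul, hL a ha]
    · intro a b ha hb
      rw [map_add, ha, hb, add_zero]
  | succ j ih =>
    intro X _ _ _ α
    obtain ⟨N, g, hg⟩ := Module.Finite.exists_fin' R X
    have hS := LinearMap.shortExact_shortComplexKer hg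
    have : Projective (LinearMap.shortComplexKer g).X₂ :=
      inferInstanceAs (Projective (ModuleCat.of R (Fin N → R)))
    obtain ⟨β, rfl⟩ := precomp_extClass_surjective_of_projective_X₂ L hS j α
    obtain ⟨t, ht⟩ := ih (LinearMap.ker g) β
    obtain ⟨k, hk⟩ := Ideal.exists_pow_inf_eq_pow_smul I (LinearMap.ker g)
    refine ⟨k + t, ?_⟩
    -- the restricted surjection `I ^ (k + t) F → I ^ (k + t) X`
    have hmap : ∀ y ∈ (I ^ (k + t) • (⊤ : Submodule R (Fin N → R))),
        g y ∈ (I ^ (k + t) • (⊤ : Submodule R X)) := by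
      intro y hy
      have := Submodule.mem_map_of_mem (f := g) hy
      rw [Submodule.map_smul''] at this
      exact Submodule.smul_mono le_rfl le_top this
    let g' := g.restrict hmap
    have hg' : Function.Surjective g' := by
      rintro ⟨x, hx⟩
      have : x ∈ Submodule.map g (I ^ (k + t) • (⊤ : Submodule R (Fin N → R))) := by
        rwa [Submodule.map_smul'', Submodule.map_top, LinearMap.range_eq_top.mpr hg]
      obtain ⟨y, hy, rfl⟩ := this
      exact ⟨⟨y, hy⟩, rfl⟩
    have hS' := LinearMap.shortExact_shortComplexKer hg'
    have hκ : ∀ z : LinearMap.ker g', ∃ hz : (z.1 : Fin N → R) ∈ LinearMap.ker g,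
        (⟨z.1, hz⟩ : LinearMap.ker g) ∈ I ^ t • (⊤ : Submodule R (LinearMap.ker g)) := by
      intro z
      have hz : (z.1 : Fin N → R) ∈ LinearMap.ker g := by
        have := z.2
        rw [LinearMap.mem_ker] at this ⊢
        exact congrArg Subtype.val this
      refine ⟨hz, ?_⟩
      rw [Submodule.mem_smul_top_iff]
      have h1 : (z.1 : Fin N → R) ∈ I ^ (k + t) • ⊤ ⊓ LinearMap.ker g := ⟨z.1.2, hz⟩
      rw [hk _ (Nat.le_add_right k t), Nat.add_sub_cancel_left] at h1
      exact Submodule.smul_mono le_rfl inf_le_right h1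
    let κ : LinearMap.ker g' →ₗ[R] (I ^ t • (⊤ : Submodule R (LinearMap.ker g)) : Submodule R _) :=
      { toFun := fun z => ⟨⟨z.1, (hκ z).1⟩, (hκ z).2⟩
        map_add' := fun _ _ => rfl
        map_smul' := fun _ _ => rfl }
    let φ : LinearMap.shortComplexKer g' ⟶ LinearMap.shortComplexKer g :=
      { τ₁ := ModuleCat.ofHom κ ≫ ModuleCat.ofHom (Submodule.subtype _)
        τ₂ := ModuleCat.ofHom (Submodule.subtype _)
        τ₃ := ModuleCat.ofHom (Submodule.subtype _)
        comm₁₂ := by ext; rfl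
        comm₂₃ := by ext; rfl }
    have hnat := ShortComplex.ShortExact.extClass_naturality hS' hS φ
    change (Ext.mk₀ φ.τ₃).comp (hS.extClass.comp β (add_comm 1 j)) (zero_add (j + 1)) = 0
    rw [← Ext.comp_assoc _ _ _ (zero_add 1) (add_comm 1 j) (by omega), ← hnat,
      Ext.comp_assoc _ _ _ (add_zero 1) (zero_add j) (by omega)]
    change hS'.extClass.comp
      ((Ext.mk₀ (ModuleCat.ofHom κ ≫ ModuleCat.ofHom (Submodule.subtype _))).comp β (zero_add j))
      (add_comm 1 j) = 0
    rw [← Ext.mk₀_comp_mk₀_assoc, ht]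
    simp

/-- Local cohomology in positive degree of a module killed by a power of `I` is zero. -/
lemma LC.subsingleton_of_pow_smul (L : ModuleCat.{u} R) (s : ℕ)
    (hL : ∀ a ∈ I ^ s, ∀ y : L, a • y = 0) (n : ℕ) : Subsingleton (LC I (n + 1) L) := by
  suffices h : ∀ x : LC I (n + 1) L, x = 0 from ⟨fun x y => by rw [h x, h y]⟩
  intro x
  obtain ⟨t, α, rfl⟩ := Module.DirectLimit.exists_of x
  let T : ℕ → ShortComplex (ModuleCat.{u} R) := fun t =>
    ShortComplex.mk (ModuleCat.ofHom (I ^ t).subtype) (ModuleCat.ofHom (I ^ t).mkQ)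
      (by ext y; exact (Submodule.Quotient.mk_eq_zero _).mpr y.2)
  have hT : ∀ t, (T t).ShortExact := fun t =>
    { exact := by
        rw [ShortComplex.moduleCat_exact_iff]
        intro y hy
        exact ⟨⟨y, (Submodule.Quotient.mk_eq_zero _).mp hy⟩, rfl⟩
      mono_f := (ModuleCat.mono_iff_injective _).mpr (Submodule.subtype_injective _)
      epi_g := (ModuleCat.epi_iff_surjective _).mpr (Submodule.mkQ_surjective _) }
  have : Projective (T t).X₂ := inferInstanceAs (Projective (ModuleCat.of R R))
  obtain ⟨β, rfl⟩ := precomp_extClass_surjective_of_projective_X₂ L (hT t) n α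
  obtain ⟨v, hv⟩ := exists_restrict_eq_zero I L s hL n (I ^ t : Ideal R) β
  have hle : t ≤ t + v := Nat.le_add_right t v
  have hκ : ∀ z : (I ^ (t + v) : Ideal R), (⟨z.1, Ideal.pow_le_pow_right hle z.2⟩ : (I ^ t : Ideal R)) ∈
      I ^ v • (⊤ : Submodule R (I ^ t : Ideal R)) := by
    intro z
    rw [Submodule.mem_smul_top_iff]
    have h : I ^ (t + v) = I ^ v • I ^ t := by rw [smul_eq_mul, ← pow_add, add_comm]
    exact h.le z.2
  let κ : (I ^ (t + v) : Ideal R) →ₗ[R] (I ^ v • (⊤ : Submodule R (I ^ t : Ideal R)) : Submodule R _) :=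
    { toFun := fun z => ⟨⟨z.1, Ideal.pow_le_pow_right hle z.2⟩, hκ z⟩
      map_add' := fun _ _ => rfl
      map_smul' := fun _ _ => rfl }
  let φ : T (t + v) ⟶ T t :=
    { τ₁ := ModuleCat.ofHom κ ≫ ModuleCat.ofHom (Submodule.subtype _)
      τ₂ := 𝟙 _
      τ₃ := proj I hle
      comm₁₂ := by ext; rfl
      comm₂₃ := by ext; rfl }
  have hnat := ShortComplex.ShortExact.extClass_naturality (hT (t + v)) (hT t) φ
  have key : (Ext.mk₀ (proj I hle)).comp ((hT t).extClass.precomp L (add_comm 1 n) β)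
      (zero_add (n + 1)) = 0 := by
    change (Ext.mk₀ φ.τ₃).comp ((hT t).extClass.comp β (add_comm 1 n)) (zero_add (n + 1)) = 0
    rw [← Ext.comp_assoc _ _ _ (zero_add 1) (add_comm 1 n) (by omega), ← hnat,
      Ext.comp_assoc _ _ _ (add_zero 1) (zero_add n) (by omega)]
    change (hT (t + v)).extClass.comp
      ((Ext.mk₀ (ModuleCat.ofHom κ ≫ ModuleCat.ofHom (Submodule.subtype _))).comp β (zero_add n))
      (add_comm 1 n) = 0
    rw [← Ext.mk₀_comp_mk₀_assoc, hv]
    simp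
  rw [← Module.DirectLimit.of_f (f := trans I (n + 1) L) (hij := hle), trans_apply]
  exact (congrArg (LC.of I (n + 1) L (t + v)) key).trans (map_zero _)

end Effaceable

/-! ### Local cohomology in degree zero -/

section DegreeZero

variable {R : Type u} [CommRing R] (I : Ideal R)

/-- Evaluation at `1`, embedding `LC I 0 M` into `M`. -/
noncomputable def LC.ev (M : ModuleCat.{u} R) : LC I 0 M →ₗ[R] M :=
  Module.DirectLimit.lift R ℕ _ (trans I 0 M)
    (fun t => { toFun := fun α => (Ext.linearEquiv₀ (R := R) α).hom (Submodule.Quotient.mk 1)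
                map_add' := fun a b => by rw [map_add]; rfl
                map_smul' := fun a b => by rw [map_smul]; rfl })
    (by
      intro i j hij α
      obtain ⟨f, rfl⟩ := (Ext.linearEquiv₀ (R := R)).symm.surjective α
      have : trans I 0 M i j hij (Ext.linearEquiv₀ (R := R).symm f) =
        Ext.linearEquiv₀ (R := R).symm (proj I hij ≫ f) := by
        rw [trans_apply]; simp
      rw [this]
      simp only [LinearMap.coe_mk, AddHom.coe_mk, LinearEquiv.apply_symm_apply]
      rfl)

lemma LC.ev_of (M : ModuleCat.{u} R) (t : ℕ) (f : Q I t ⟶ M) :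
    LC.ev I M (LC.of I 0 M t (Ext.mk₀ f)) = f.hom (Submodule.Quotient.mk 1) := by
  have : Ext.mk₀ f = Ext.linearEquiv₀ (R := R).symm f := by simp
  rw [this]
  simp only [LC.ev, Module.DirectLimit.lift_of, LinearMap.coe_mk, AddHom.coe_mk,
    LinearEquiv.apply_symm_apply]

lemma LC.ev_injective (M : ModuleCat.{u} R) : Function.Injective (LC.ev I M) := by
  rw [injective_iff_map_eq_zero]
  intro x hx
  obtain ⟨t, α, rfl⟩ := Module.DirectLimit.exists_of x
  obtain ⟨f, rfl⟩ := Ext.mk₀_bijective _ _ |>.surjective α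
  have h1 := (LC.ev_of I M t f).symm.trans hx
  have : f = 0 := by
    ext
    exact h1
  rw [this]
  simp

lemma LC.exists_ev_eq (M : ModuleCat.{u} R) (y : M) (t : ℕ) (h : ∀ a ∈ I ^ t, a • y = 0) :
    ∃ x, LC.ev I M x = y := by
  let f : Q I t ⟶ M := ModuleCat.ofHom ((I ^ t).liftQ (LinearMap.toSpanSingleton R M y)
    (fun a ha => by
      rw [LinearMap.mem_ker, LinearMap.toSpanSingleton_apply]; exact h a ha))
  refine ⟨LC.of I 0 M t (Ext.mk₀ f), ?_⟩
  rw [LC.ev_of]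
  change LinearMap.toSpanSingleton R M y 1 = y
  rw [LinearMap.toSpanSingleton_apply, one_smul]

end DegreeZero

section Algebra

variable {R : Type*} [CommRing R]

/-! ### Regular elements and prime avoidance -/

section Regular

variable [IsNoetherianRing R] [IsLocalRing R]

/-- The `m`-torsion submodule of a finite module: it is killed by a power of `m`, and the quotient
has depth at least one. -/
lemma exists_torsion_submodule (M : Type*) [AddCommGroup M] [Module R M] [Module.Finite R M] :
    ∃ (L : Submodule R M) (s : ℕ), maximalIdeal R ^ s • L = ⊥ ∧
      ∀ z : M ⧸ L, (∀ a ∈ maximalIdeal R, a • z = 0) → z = 0 := by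
  obtain ⟨L, ⟨s, hs⟩, hmax⟩ := set_has_maximal_iff_noetherian.mpr
    (inferInstance : IsNoetherian R M) {L | ∃ s : ℕ, maximalIdeal R ^ s • L = ⊥}
    ⟨⊥, 0, by simp⟩
  refine ⟨L, s, hs, fun z hz => ?_⟩
  obtain ⟨y, rfl⟩ := L.mkQ_surjective z
  have h1 : maximalIdeal R • (L ⊔ Submodule.span R {y}) ≤ L := by
    rw [Submodule.smul_sup]
    refine sup_le Submodule.smul_le_right ?_
    rw [Submodule.smul_le]
    intro a ha w hw
    obtain ⟨c, rfl⟩ := Submodule.mem_span_singleton.mp hw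
    rw [smul_comm]
    apply L.smul_mem
    have := hz a ha
    rwa [← map_smul, Submodule.mkQ_apply, Submodule.Quotient.mk_eq_zero] at this
  have h2 : ¬ L < L ⊔ Submodule.span R {y} := by
    refine hmax _ ⟨s + 1, ?_⟩
    rw [pow_succ, mul_smul, eq_bot_iff, ← hs]
    exact Submodule.smul_mono le_rfl h1
  rw [Submodule.mkQ_apply, Submodule.Quotient.mk_eq_zero]
  by_contra hy
  refine h2 (lt_of_le_of_ne le_sup_left fun h => hy ?_)
  rw [h]
  exact Submodule.mem_sup_right (Submodule.mem_span_singleton_self y)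

/-- Prime avoidance: over a finite module of positive depth, a regular element can be chosen outside
any finite set of nonmaximal primes. -/
lemma exists_regular_notMem (N : Type*) [AddCommGroup N] [Module R N] [Module.Finite R N]
    (hN : ∀ z : N, (∀ a ∈ maximalIdeal R, a • z = 0) → z = 0)
    (Q : Finset (Ideal R)) (hQ : ∀ p ∈ Q, p.IsPrime ∧ p ≠ maximalIdeal R) :
    ∃ x ∈ maximalIdeal R, (∀ p ∈ Q, x ∉ p) ∧ IsSMulRegular N x := by
  classical
  let S : Finset (Ideal R) := (associatedPrimes.finite R N).toFinset ∪ Q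
  have hS : ∀ p ∈ S, p.IsPrime ∧ p ≠ maximalIdeal R := by
    intro p hp
    rcases Finset.mem_union.mp hp with h | h
    · have hass : IsAssociatedPrime p N := by
        simpa [associatedPrimes] using h
      refine ⟨hass.isPrime, ?_⟩
      rintro rfl
      obtain ⟨hp, z, hz⟩ := isAssociatedPrime_iff_exists_injective_linearMap (maximalIdeal R) N |>.mp hass
      have h0 : z (Submodule.Quotient.mk 1) = 0 := by
        apply hN
        intro a ha
        rw [← map_smul, ← Submodule.Quotient.mk_smul,
          (Submodule.Quotient.mk_eq_zero _).mpr (by simpa using ha), map_zero]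
      have := (map_eq_zero_iff z hz).mp h0
      rw [Submodule.Quotient.mk_eq_zero] at this
      exact hp.ne_top ((Ideal.eq_top_iff_one _).mpr this)
    · exact hQ p h
  have hnot : ¬ ((maximalIdeal R : Set R) ⊆ ⋃ p ∈ (S : Set (Ideal R)), (p : Set R)) := by
    intro h
    obtain ⟨p, hp, hle⟩ := (Ideal.subset_union_prime (f := fun p : Ideal R => p) ⊥ ⊥
      (fun p hp _ _ => (hS p hp).1)).mp h
    exact (hS p hp).2 ((IsLocalRing.eq_maximalIdeal
      (((maximalIdeal.isMaximal R).eq_of_le (hS p hp).1.ne_top hle) ▸ maximalIdeal.isMaximal R)))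
  obtain ⟨x, hx, hxS⟩ := Set.not_subset.mp hnot
  simp only [Set.mem_iUnion, not_exists] at hxS
  refine ⟨x, hx, fun p hp => hxS p (Finset.mem_union_right _ hp), ?_⟩
  by_contra hreg
  have : x ∈ ⋃ p ∈ associatedPrimes R N, (p : Set R) := by
    rw [biUnion_associatedPrimes_eq_compl_regular]
    exact hreg
  simp only [Set.mem_iUnion] at this
  obtain ⟨p, hp, hxp⟩ := this
  exact hxS p (Finset.mem_union_left _ (by simpa using hp)) hxp

end Regular

/-! ### Artinian modules -/

/-- A module on which `x` acts locally nilpotently is Artinian as soon as `(0 : x)` is: a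
descending chain `Aₙ` is controlled by the submodules `xʲAₙ ∩ (0 : x)` of `(0 : x)`, which decrease
in both indices. -/
lemma isArtinian_of_torsionBy {A : Type*} [AddCommGroup A] [Module R A] (x : R)
    (hx : ∀ a : A, ∃ n : ℕ, x ^ n • a = 0) [IsArtinian R (Submodule.torsionBy R A x)] :
    IsArtinian R A := by
  rw [← monotone_stabilizes_iff_artinian]
  intro f
  let C : ℕ → Submodule R A := fun n => OrderDual.ofDual (f n)
  have hC : ∀ {n n'}, n ≤ n' → C n' ≤ C n := fun h => f.monotone h
  let B : ℕ → ℕ → Submodule R (Submodule.torsionBy R A x) := fun n j =>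
    ((C n).map (LinearMap.lsmul R A (x ^ j))).comap (Submodule.subtype _)
  have hBn : ∀ {n n'} j, n ≤ n' → B n' j ≤ B n j := fun j h =>
    Submodule.comap_mono (Submodule.map_mono (hC h))
  have hBj : ∀ n {j j'}, j ≤ j' → B n j' ≤ B n j := by
    rintro n j j' h ⟨y, hy⟩ ⟨a, ha, hay⟩
    refine ⟨x ^ (j' - j) • a, (C n).smul_mem _ ha, ?_⟩
    rw [← hay]
    simp only [LinearMap.lsmul_apply, smul_smul, ← pow_add]
    congr 2
    omega
  obtain ⟨K, hK⟩ := IsArtinian.monotone_stabilizes (R := R)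
    (M := Submodule.torsionBy R A x)
    ⟨fun k => OrderDual.toDual (B k k), fun a b h => (hBj b h).trans (hBn a h)⟩
  have hcol : ∀ j, ∃ n, ∀ n', n ≤ n' → B n j = B n' j := fun j =>
    IsArtinian.monotone_stabilizes (R := R) (M := Submodule.torsionBy R A x)
      ⟨fun n => OrderDual.toDual (B n j), fun a b h => hBn j h⟩
  choose ν hν using hcol
  let N := max K ((Finset.range K).sup ν)
  -- The finitely many columns `j < K` are stable from `N` on; the other entries lie between
  -- stable diagonal entries.
  have hstab : ∀ n, N ≤ n → ∀ j, B N j ≤ B n j := by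
    intro n hn j
    by_cases hj : j < K
    · have h1 : ν j ≤ N := le_max_of_le_right (Finset.le_sup (f := ν) (Finset.mem_range.mpr hj))
      rw [← hν j N h1, ← hν j n (h1.trans hn)]
    · have hKj : K ≤ j := not_lt.mp hj
      have hKN : K ≤ N := le_max_left _ _
      calc B N j ≤ B K K := (hBj N hKj).trans (hBn K hKN)
        _ = B (max n j) (max n j) := hK _ (le_max_of_le_right hKj)
        _ ≤ B n j := (hBj _ (le_max_right n j)).trans (hBn _ (le_max_left n j))
  refine ⟨N, fun n hn => ?_⟩
  have key : ∀ j : ℕ, ∀ a ∈ C N, x ^ j • a = 0 → a ∈ C n := by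
    intro j
    induction j with
    | zero =>
      intro a _ h
      rw [pow_zero, one_smul] at h
      rw [h]
      exact zero_mem _
    | succ j ih =>
      intro a ha h
      have hmem : (⟨x ^ j • a, by
          rw [Submodule.mem_torsionBy_iff, smul_smul, ← pow_succ']; exact h⟩ :
          Submodule.torsionBy R A x) ∈ B N j := ⟨a, ha, rfl⟩
      obtain ⟨a', ha', h'⟩ := hstab n hn j hmem
      have h'' : x ^ j • a' = x ^ j • a := h'
      have := ih (a - a') (sub_mem ha (hC hn ha')) (by rw [smul_sub, h'', sub_self])
      simpa using add_mem this ha'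
  change C N = C n
  refine le_antisymm (fun a ha => ?_) (hC hn)
  obtain ⟨j, hj⟩ := hx a
  exact key j a ha hj

/-- A consequence of secondary representation: if `B` is a submodule of an Artinian module and `x`
avoids a suitable finite set of nonmaximal primes, all the submodules `xᵏB` contain one and the same
`mˢB`. The primes are the radicals of the annihilators of the join-irreducible submodules into which
`B` decomposes. -/
lemma exists_primes_of_isArtinian [IsNoetherianRing R] [IsLocalRing R]
    {A : Type*} [AddCommGroup A] [Module R A] [IsArtinian R A] (B : Submodule R A) :
    ∃ Q : Finset (Ideal R), (∀ p ∈ Q, p.IsPrime ∧ p ≠ maximalIdeal R) ∧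
      ∀ x : R, (∀ p ∈ Q, x ∉ p) →
        ∃ s : ℕ, ∀ k : ℕ, maximalIdeal R ^ s • B ≤ B.map (LinearMap.lsmul R A (x ^ k)) := by
  classical
  induction B using WellFoundedLT.induction with
  | ind B ih =>
  by_cases hdec : ∃ C D, C < B ∧ D < B ∧ C ⊔ D = B
  · obtain ⟨C, D, hC, hD, hCD⟩ := hdec
    obtain ⟨Q₁, hQ₁, h₁⟩ := ih C hC
    obtain ⟨Q₂, hQ₂, h₂⟩ := ih D hD
    refine ⟨Q₁ ∪ Q₂, fun p hp => (Finset.mem_union.mp hp).elim (hQ₁ p) (hQ₂ p), fun x hx => ?_⟩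
    obtain ⟨s₁, hs₁⟩ := h₁ x fun p hp => hx p (Finset.mem_union_left _ hp)
    obtain ⟨s₂, hs₂⟩ := h₂ x fun p hp => hx p (Finset.mem_union_right _ hp)
    refine ⟨max s₁ s₂, fun k => ?_⟩
    rw [← hCD, Submodule.smul_sup, Submodule.map_sup]
    exact sup_le_sup
      ((Submodule.smul_mono (Ideal.pow_le_pow_right (le_max_left _ _)) le_rfl).trans (hs₁ k))
      ((Submodule.smul_mono (Ideal.pow_le_pow_right (le_max_right _ _)) le_rfl).trans (hs₂ k))
  by_cases hB : B = ⊥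
  · exact ⟨∅, by simp, fun x _ => ⟨0, fun k => by simp [hB]⟩⟩
  have hle : ∀ y : R, B.map (LinearMap.lsmul R A y) ≤ B := by
    rintro y _ ⟨b, hb, rfl⟩
    exact B.smul_mem y hb
  have hmul : ∀ y z : R, B.map (LinearMap.lsmul R A (y * z)) =
      (B.map (LinearMap.lsmul R A z)).map (LinearMap.lsmul R A y) := by
    intro y z
    rw [← Submodule.map_comp]
    congr 1
    ext a
    exact mul_smul y z a
  -- Fitting's lemma: each element acts surjectively or nilpotently on the indecomposable `B`
  have hdich : ∀ y : R, y ∉ B.annihilator.radical → B.map (LinearMap.lsmul R A y) = B := by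
    intro y hy
    obtain ⟨k, hk⟩ := IsArtinian.monotone_stabilizes (R := R) (M := A)
      ⟨fun k => OrderDual.toDual (B.map (LinearMap.lsmul R A (y ^ k))), by
        refine monotone_nat_of_le_succ fun k => ?_
        change B.map (LinearMap.lsmul R A (y ^ (k + 1))) ≤ B.map (LinearMap.lsmul R A (y ^ k))
        rw [pow_succ, hmul]
        exact Submodule.map_mono (hle y)⟩
    have hk2 : B.map (LinearMap.lsmul R A (y ^ (k + 1))) =
        B.map (LinearMap.lsmul R A (y ^ ((k + 1) + (k + 1)))) :=
      (hk (k + 1) (by omega)).symm.trans (hk _ (by omega))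
    have hsum : B.map (LinearMap.lsmul R A (y ^ (k + 1))) ⊔
        (B ⊓ Submodule.torsionBy R A (y ^ (k + 1))) = B := by
      refine le_antisymm (sup_le (hle _) inf_le_left) fun b hb => ?_
      have : y ^ (k + 1) • b ∈ B.map (LinearMap.lsmul R A (y ^ (k + 1))) := ⟨b, hb, rfl⟩
      rw [hk2] at this
      obtain ⟨c, hc, hcb⟩ := this
      have hcb' : y ^ (k + 1) • y ^ (k + 1) • c = y ^ (k + 1) • b := by
        rw [smul_smul, ← pow_add]; exact hcb
      refine Submodule.mem_sup.mpr ⟨y ^ (k + 1) • c, ⟨c, hc, rfl⟩, b - y ^ (k + 1) • c,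
        ⟨sub_mem hb (B.smul_mem _ hc), ?_⟩, by abel⟩
      rw [SetLike.mem_coe, Submodule.mem_torsionBy_iff, smul_sub, hcb', sub_self]
    by_contra hne
    refine hdec ⟨_, _, ?_, ?_, hsum⟩
    · refine lt_of_le_of_ne (hle _) fun h => hne (le_antisymm (hle _) ?_)
      rw [pow_succ', hmul] at h
      exact h.ge.trans (Submodule.map_mono (hle _))
    · refine lt_of_le_of_ne inf_le_left fun h => hy ⟨k + 1, ?_⟩
      rw [Submodule.mem_annihilator]
      intro b hb
      exact (Submodule.mem_torsionBy_iff _ _).mp (inf_eq_left.mp h hb)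
  have hpow : ∀ y : R, B.map (LinearMap.lsmul R A y) = B →
      ∀ k : ℕ, B.map (LinearMap.lsmul R A (y ^ k)) = B := by
    intro y hy k
    induction k with
    | zero =>
      have h1 : LinearMap.lsmul R A (y ^ 0) = LinearMap.id := by
        ext a
        simp
      rw [h1, Submodule.map_id]
    | succ k ihk => rw [pow_succ', hmul, ihk, hy]
  have hann : ∀ y : R, y ∈ B.annihilator → B.map (LinearMap.lsmul R A y) = ⊥ := by
    intro y hy
    rw [eq_bot_iff]
    rintro _ ⟨b, hb, rfl⟩
    exact Submodule.mem_annihilator.mp hy b hb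
  by_cases hm : B.annihilator.radical = maximalIdeal R
  · refine ⟨∅, by simp, fun x _ => ?_⟩
    obtain ⟨s, hs⟩ := Ideal.exists_radical_pow_le_of_fg B.annihilator (IsNoetherian.noetherian _)
    rw [hm] at hs
    refine ⟨s, fun k => le_trans (le_of_eq ?_) bot_le⟩
    rw [eq_bot_iff, Submodule.smul_le]
    intro a ha b hb
    exact Submodule.mem_annihilator.mp (hs ha) b hb
  · refine ⟨{B.annihilator.radical}, ?_, fun x hx => ⟨0, fun k => ?_⟩⟩
    · intro p hp
      obtain rfl := Finset.mem_singleton.mp hp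
      refine ⟨⟨?_, ?_⟩, hm⟩
      · intro h
        rw [Ideal.radical_eq_top, Submodule.annihilator_eq_top_iff] at h
        exact hB h
      · intro y z hyz
        by_contra! hcon
        obtain ⟨k, hk⟩ := hyz
        refine hB ?_
        rw [← hann _ hk, hpow (y * z) (by rw [hmul, hdich z hcon.2, hdich y hcon.1])]
    · rw [pow_zero, Ideal.one_eq_top, Submodule.top_smul,
        hpow x (hdich x (hx _ (Finset.mem_singleton_self _)))]

end Algebra

/-! ### Dimension of the support -/

section Dimension

open scoped Pointwise

lemma add_one_le_add_one_iff (x : WithBot ℕ∞) (n : ℕ) :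
    x + 1 ≤ ((n + 1 : ℕ) : WithBot ℕ∞) ↔ x ≤ n := by
  induction x with
  | bot => simp
  | coe x =>
    induction x with
    | top =>
      norm_cast
      rw [top_add]
      simp
    | coe x => norm_cast; omega

lemma add_one_lt_add_one_iff (x : WithBot ℕ∞) (n : ℕ) :
    x + 1 < ((n + 1 : ℕ) : WithBot ℕ∞) ↔ x < n := by
  induction x with
  | bot => simp
  | coe x =>
    induction x with
    | top =>
      norm_cast
      rw [top_add]
      simp
    | coe x => norm_cast; omega

lemma lt_zero_iff_eq_bot (x : WithBot ℕ∞) : x < ((0 : ℕ) : WithBot ℕ∞) ↔ x = ⊥ := by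
  induction x with
  | bot => simp
  | coe x =>
    induction x with
    | top => norm_cast
    | coe x => norm_cast; simp

variable {R : Type*} [CommRing R]

lemma supportDim_le_of_support_subset {M N : Type*} [AddCommGroup M] [Module R M] [AddCommGroup N]
    [Module R N] (h : Module.support R M ⊆ Module.support R N) :
    Module.supportDim R M ≤ Module.supportDim R N :=
  Order.krullDim_le_of_strictMono (fun a => ⟨a.1, h a.2⟩) fun {_ _} lt => lt

lemma mem_support_range_lsmul {M : Type*} [AddCommGroup M] [Module R M] (r : R)
    (p : PrimeSpectrum R) : p ∈ Module.support R (LinearMap.range (LinearMap.lsmul R M r)) ↔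
      ∃ y : M, ∀ c ∉ p.asIdeal, c • r • y ≠ 0 := by
  rw [Module.mem_support_iff']
  constructor
  · rintro ⟨⟨_, y, rfl⟩, h⟩
    exact ⟨y, fun c hc h0 => h c hc (Subtype.ext h0)⟩
  · rintro ⟨y, h⟩
    exact ⟨⟨r • y, y, rfl⟩, fun c hc h0 => h c hc (congrArg Subtype.val h0)⟩

/-- To bound the dimension of `rM` by a positive number, it suffices to bound that of all `arM`
with `a` in some power of `m`: these have the same nonmaximal support. -/
lemma supportDim_range_lsmul_lt [IsLocalRing R] {M : Type*} [AddCommGroup M] [Module R M] (r : R)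
    (d s : ℕ) (h : ∀ a ∈ maximalIdeal R ^ s,
      Module.supportDim R (LinearMap.range (LinearMap.lsmul R M (a * r))) <
        ((d + 1 : ℕ) : WithBot ℕ∞)) :
    Module.supportDim R (LinearMap.range (LinearMap.lsmul R M r)) <
      ((d + 1 : ℕ) : WithBot ℕ∞) := by
  by_contra! hcon
  obtain ⟨q, hq⟩ := Order.le_krullDim_iff.mp hcon
  let p : Fin (q.length + 1) → PrimeSpectrum R := fun i => (q i).1
  have hp : StrictMono p := fun i j hij => q.strictMono hij
  have hlt : p 0 < p (Fin.last _) := hp (by rw [Fin.lt_def]; simp [hq])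
  have hlt' : p 0 < closedPoint R := lt_of_lt_of_le hlt (le_maximalIdeal (p (Fin.last _)).2.ne_top)
  obtain ⟨a, ha, hap⟩ := Set.exists_of_ssubset (show ((p 0).asIdeal : Set R) ⊂ maximalIdeal R from hlt')
  refine (h (a ^ s) (Ideal.pow_mem_pow ha s)).not_ge ?_
  have hmem : ∀ i, p i ∈ Module.support R
      (LinearMap.range (LinearMap.lsmul R M (a ^ s * r))) := by
    intro i
    refine Module.mem_support_mono (hp.monotone (Fin.zero_le i)) ?_
    obtain ⟨y, hy⟩ := (mem_support_range_lsmul r (p 0)).mp (q 0).2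
    refine (mem_support_range_lsmul _ _).mpr ⟨y, fun c hc => ?_⟩
    rw [mul_smul, smul_smul]
    refine hy _ fun hmem => ?_
    rcases (p 0).2.mem_or_mem hmem with h1 | h1
    · exact hc h1
    · exact hap ((p 0).2.mem_of_pow_mem s h1)
  exact Order.le_krullDim_iff.mpr ⟨LTSeries.mk q.length (fun i => ⟨p i, hmem i⟩)
    (fun i j hij => hp hij), hq⟩

/-- By the Artin-Rees lemma, the dimension of `rM` can be bounded by looking at `r(M/xᵏM)` for
large `k`. -/
lemma supportDim_range_lsmul_lt_of_quotient [IsNoetherianRing R] [IsLocalRing R] {M : Type*}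
    [AddCommGroup M] [Module R M] [Module.Finite R M] (x : R) (hx : x ∈ maximalIdeal R) (r : R)
    (d : ℕ) (h : ∀ k : ℕ, Module.supportDim R
      (LinearMap.range (LinearMap.lsmul R (QuotSMulTop (x ^ (k + 1)) M) r)) < (d : WithBot ℕ∞)) :
    Module.supportDim R (LinearMap.range (LinearMap.lsmul R M r)) <
      ((d + 1 : ℕ) : WithBot ℕ∞) := by
  set N := LinearMap.range (LinearMap.lsmul R M r) with hN
  obtain ⟨c, hc⟩ := Ideal.exists_pow_inf_eq_pow_smul (Ideal.span {x}) N
  have hAR : x ^ (c + 1) • (⊤ : Submodule R M) ⊓ N ≤ x • N := by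
    have := hc (c + 1) (by omega)
    rw [Nat.add_sub_cancel_left, pow_one, Ideal.span_singleton_pow,
      Submodule.ideal_span_singleton_smul, Submodule.ideal_span_singleton_smul] at this
    rw [this]
    exact smul_mono_right _ inf_le_right
  refine lt_of_le_of_lt (Module.supportDim_le_supportDim_quotSMulTop_succ hx) ?_
  rw [add_one_lt_add_one_iff]
  refine lt_of_le_of_lt (supportDim_le_of_support_subset fun p hp => ?_) (h c)
  obtain ⟨z, hz⟩ := Module.mem_support_iff'.mp hp
  obtain ⟨⟨_, y, rfl⟩, rfl⟩ := Submodule.mkQ_surjective _ z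
  refine (mem_support_range_lsmul _ _).mpr ⟨Submodule.Quotient.mk y, fun b hb h0 => hz b hb ?_⟩
  rw [← Submodule.Quotient.mk_smul, ← Submodule.Quotient.mk_smul,
    Submodule.Quotient.mk_eq_zero] at h0
  obtain ⟨w, hw, hwy⟩ := hAR ⟨h0, N.smul_mem b ⟨y, rfl⟩⟩
  rw [← map_smul, Submodule.mkQ_apply, Submodule.Quotient.mk_eq_zero]
  exact ⟨⟨w, hw⟩, trivial, Subtype.ext hwy⟩

end Dimension

/-! ### Finite modules killed by a power of the maximal ideal -/

section Artinian

variable {R : Type*} [CommRing R] [IsNoetherianRing R] [IsLocalRing R]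

lemma isArtinian_of_pow_smul {A : Type*} [AddCommGroup A] [Module R A] [Module.Finite R A] (s : ℕ)
    (h : ∀ a ∈ maximalIdeal R ^ s, ∀ y : A, a • y = 0) : IsArtinian R A := by
  let I := maximalIdeal R ^ (s + 1)
  have hIm : I ≤ maximalIdeal R := Ideal.pow_le_self (Nat.succ_ne_zero s)
  have : Nontrivial (R ⧸ I) := Ideal.Quotient.nontrivial_iff.mpr fun htop =>
    Ideal.IsPrime.ne_top (inferInstance : (maximalIdeal R).IsPrime) (top_le_iff.mp (htop ▸ hIm))
  have : IsLocalRing (R ⧸ I) := .of_surjective' _ Ideal.Quotient.mk_surjective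
  have : IsArtinianRing (R ⧸ I) := by
    rw [isArtinianRing_iff_isNilpotent_maximalIdeal]
    refine ⟨s + 1, ?_⟩
    have hle : maximalIdeal (R ⧸ I) ≤ (maximalIdeal R).map (Ideal.Quotient.mk I) := by
      intro z hz
      obtain ⟨a, rfl⟩ := Ideal.Quotient.mk_surjective z
      refine Ideal.mem_map_of_mem _ ?_
      rw [mem_maximalIdeal, mem_nonunits_iff] at hz ⊢
      exact fun hu => hz (hu.map _)
    rw [Ideal.zero_eq_bot, eq_bot_iff]
    refine (Ideal.pow_right_mono hle (s + 1)).trans ?_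
    rw [← Ideal.map_pow]
    exact (Ideal.map_quotient_self I).le
  have htors : Module.IsTorsionBySet R A I := fun y a =>
    h a.1 (Ideal.pow_le_pow_right (Nat.le_succ s) a.2) y
  let _ := htors.module
  have : IsScalarTower R (R ⧸ I) A := htors.isScalarTower
  have : Module.Finite (R ⧸ I) A := Module.Finite.of_restrictScalars_finite R _ _
  exact isArtinian_of_surjective_algebraMap (R := R ⧸ I) Ideal.Quotient.mk_surjective

end Artinian

/-! ### Vanishing, Artinianness and annihilators -/

section Top

variable {R : Type u} [CommRing R]

/-- The short complex `0 → L → M → M/L → 0`. -/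
noncomputable def subSeq {M : Type u} [AddCommGroup M] [Module R M] (L : Submodule R M) :
    ShortComplex (ModuleCat.{u} R) :=
  ShortComplex.mk (ModuleCat.ofHom L.subtype) (ModuleCat.ofHom L.mkQ)
    (by ext y; exact (Submodule.Quotient.mk_eq_zero _).mpr y.2)

lemma subSeq_shortExact {M : Type u} [AddCommGroup M] [Module R M] (L : Submodule R M) :
    (subSeq L).ShortExact :=
  { exact := by
      rw [ShortComplex.moduleCat_exact_iff]
      intro y hy
      exact ⟨⟨y, (Submodule.Quotient.mk_eq_zero _).mp hy⟩, rfl⟩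
    mono_f := (ModuleCat.mono_iff_injective _).mpr (Submodule.subtype_injective _)
    epi_g := (ModuleCat.epi_iff_surjective _).mpr (Submodule.mkQ_surjective _) }

section SMul

variable [IsLocalRing R] {N : Type u} [AddCommGroup N] [Module R N] {x : R}
  (hx : IsSMulRegular N x) (n : ℕ)

/-- The connecting map of `0 → N → N → N/xN → 0`. -/
noncomputable def LC.δx : LC (maximalIdeal R) n (ModuleCat.of R (QuotSMulTop x N)) →ₗ[R]
    LC (maximalIdeal R) (n + 1) (ModuleCat.of R N) :=
  LC.δ (maximalIdeal R) n (S := ModuleCat.smulShortComplex (ModuleCat.of R N) x)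
    (IsSMulRegular.smulShortComplex_shortExact (M := ModuleCat.of R N) hx)

lemma LC.exists_δx_eq (z : LC (maximalIdeal R) (n + 1) (ModuleCat.of R N)) (hz : x • z = 0) :
    ∃ y, LC.δx hx n y = z :=
  LC.exact₁ _ _ (IsSMulRegular.smulShortComplex_shortExact (M := ModuleCat.of R N) hx) z
    ((LC.map_smul_id _ _ x z).trans hz)

lemma LC.exists_map_eq (w : LC (maximalIdeal R) n (ModuleCat.of R (QuotSMulTop x N)))
    (hw : LC.δx hx n w = 0) : ∃ v : LC (maximalIdeal R) n (ModuleCat.of R N),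
      LC.map (maximalIdeal R) n (ModuleCat.ofHom (Submodule.mkQ _)) v = w :=
  LC.exact₃ _ _ (IsSMulRegular.smulShortComplex_shortExact (M := ModuleCat.of R N) hx) w hw

lemma LC.smul_map_eq_zero (u : LC (maximalIdeal R) n (ModuleCat.of R N)) :
    LC.map (maximalIdeal R) n (N := ModuleCat.of R (QuotSMulTop x N))
      (ModuleCat.ofHom (Submodule.mkQ _)) (x • u) = 0 := by
  rw [← LC.map_smul_id]
  exact LC.map_f_map_g (maximalIdeal R) n (S := ModuleCat.smulShortComplex (ModuleCat.of R N) x) u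

end SMul

variable [IsNoetherianRing R] [IsLocalRing R]

/-- In positive degree, passing to the quotient by a submodule killed by a power of `m` is
injective on local cohomology. -/
lemma LC.map_mkQ_injective {M : Type u} [AddCommGroup M] [Module R M] {L : Submodule R M} {s : ℕ}
    (hL : maximalIdeal R ^ s • L = ⊥) (n : ℕ) :
    Function.Injective (LC.map (maximalIdeal R) (n + 1) (ModuleCat.ofHom L.mkQ)) := by
  rw [injective_iff_map_eq_zero]
  intro z hz
  obtain ⟨y, rfl⟩ := LC.exact₂ _ _ (subSeq_shortExact L) z hz
  have := LC.subsingleton_of_pow_smul (maximalIdeal R) (subSeq L).X₁ s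
    (fun a ha y => Subtype.ext ((Submodule.mem_bot R).mp
      (hL ▸ Submodule.smul_mem_smul ha y.2))) n
  rw [Subsingleton.elim y 0, map_zero]
  rfl

lemma LC.map_mkQ_surjective {M : Type u} [AddCommGroup M] [Module R M] {L : Submodule R M} {s : ℕ}
    (hL : maximalIdeal R ^ s • L = ⊥) (n : ℕ) :
    Function.Surjective (LC.map (maximalIdeal R) n (ModuleCat.ofHom L.mkQ)) := by
  intro z
  have := LC.subsingleton_of_pow_smul (maximalIdeal R) (subSeq L).X₁ s
    (fun a ha y => Subtype.ext ((Submodule.mem_bot R).mp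
      (hL ▸ Submodule.smul_mem_smul ha y.2))) n
  exact LC.exact₃ _ _ (subSeq_shortExact L) z (Subsingleton.elim _ _)

/-- Grothendieck's vanishing theorem. Modulo its `m`-torsion, `M` has a regular element `x`; by
induction `x` acts injectively on local cohomology in degree `n`, every element of which is killed
by a power of `x`. -/
lemma LC.subsingleton_of_supportDim_lt (n : ℕ) :
    ∀ (M : Type u) [AddCommGroup M] [Module R M] [Module.Finite R M],
      Module.supportDim R M < (n : WithBot ℕ∞) →
        Subsingleton (LC (maximalIdeal R) n (ModuleCat.of R M)) := by
  induction n with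
  | zero =>
    intro M _ _ _ h
    rw [lt_zero_iff_eq_bot, Module.supportDim_eq_bot_iff_subsingleton] at h
    have : Subsingleton (ModuleCat.of R M) := h
    exact LC.subsingleton_of_subsingleton _ _
  | succ n ih =>
    intro M _ _ _ h
    obtain ⟨L, s, hL, hdepth⟩ := exists_torsion_submodule (R := R) M
    obtain ⟨x, hx, -, hreg⟩ := exists_regular_notMem (M ⧸ L) hdepth ∅ (by simp)
    have hdim : Module.supportDim R (QuotSMulTop x (M ⧸ L)) < (n : WithBot ℕ∞) := by
      rw [← add_one_lt_add_one_iff, Module.supportDim_quotSMulTop_succ_eq_supportDim hreg hx]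
      exact lt_of_le_of_lt (Module.supportDim_le_of_surjective L.mkQ L.mkQ_surjective) h
    have := ih (QuotSMulTop x (M ⧸ L)) hdim
    have hinj : ∀ z : LC (maximalIdeal R) (n + 1) (ModuleCat.of R (M ⧸ L)),
        x • z = 0 → z = 0 := by
      intro z hz
      obtain ⟨y, rfl⟩ := LC.exists_δx_eq hreg n z hz
      rw [Subsingleton.elim y 0, map_zero]
    have hpow : ∀ (k : ℕ) (z : LC (maximalIdeal R) (n + 1) (ModuleCat.of R (M ⧸ L))),
        x ^ k • z = 0 → z = 0 := by
      intro k
      induction k with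
      | zero => intro z hz; rwa [pow_zero, one_smul] at hz
      | succ k ihk => intro z hz; rw [pow_succ', mul_smul] at hz; exact ihk z (hinj _ hz)
    have hzero : ∀ z : LC (maximalIdeal R) (n + 1) (ModuleCat.of R (M ⧸ L)), z = 0 := by
      intro z
      obtain ⟨t, ht⟩ := LC.exists_pow_smul_eq_zero _ _ z
      exact hpow t z (ht _ (Ideal.pow_mem_pow hx t))
    exact ⟨fun z w => LC.map_mkQ_injective hL n ((hzero _).trans (hzero _).symm)⟩

/-- Local cohomology of a finite module is Artinian. The induction on the degree uses the exact
sequence `0 → N → N → N/xN → 0`, by which the kernel of `x` is a quotient of an Artinian module. -/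
lemma LC.isArtinian (n : ℕ) :
    ∀ (M : Type u) [AddCommGroup M] [Module R M] [Module.Finite R M],
      IsArtinian R (LC (maximalIdeal R) n (ModuleCat.of R M)) := by
  induction n with
  | zero =>
    intro M _ _ _
    obtain ⟨L, s, hL, hdepth⟩ := exists_torsion_submodule (R := R) M
    have : IsArtinian R L := isArtinian_of_pow_smul s
      (fun a ha y => Subtype.ext ((Submodule.mem_bot R).mp
        (hL ▸ Submodule.smul_mem_smul ha y.2)))
    have hmem : ∀ (t : ℕ) (z : M), (∀ a ∈ maximalIdeal R ^ t, a • z = 0) → z ∈ L := by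
      intro t
      induction t with
      | zero =>
        intro z hz
        rw [← one_smul R z, hz 1 (by simp)]
        exact zero_mem _
      | succ t iht =>
        intro z hz
        rw [← Submodule.Quotient.mk_eq_zero]
        refine hdepth _ fun a ha => ?_
        rw [← Submodule.Quotient.mk_smul, Submodule.Quotient.mk_eq_zero]
        refine iht _ fun b hb => ?_
        rw [smul_smul]
        exact hz _ (pow_succ (maximalIdeal R) t ▸ Ideal.mul_mem_mul hb ha)
    have hev : ∀ z, LC.ev (maximalIdeal R) (ModuleCat.of R M) z ∈ L := by
      intro z
      obtain ⟨t, ht⟩ := LC.exists_pow_smul_eq_zero _ _ z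
      exact hmem t _ fun a ha => by
        have := congrArg (LC.ev (maximalIdeal R) (ModuleCat.of R M)) (ht a ha)
        rwa [map_smul, map_zero] at this
    exact isArtinian_of_injective ((LC.ev (maximalIdeal R) (ModuleCat.of R M)).codRestrict L hev)
      fun z w hzw => LC.ev_injective _ _ (congrArg Subtype.val hzw)
  | succ n ih =>
    intro M _ _ _
    obtain ⟨L, s, hL, hdepth⟩ := exists_torsion_submodule (R := R) M
    obtain ⟨x, hx, -, hreg⟩ := exists_regular_notMem (M ⧸ L) hdepth ∅ (by simp)
    have hart := ih (QuotSMulTop x (M ⧸ L))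
    have htors : IsArtinian R (Submodule.torsionBy R
        (LC (maximalIdeal R) (n + 1) (ModuleCat.of R (M ⧸ L))) x) :=
      isArtinian_of_le (t := LinearMap.range (LC.δx hreg n)) fun z hz =>
        LC.exists_δx_eq hreg n z ((Submodule.mem_torsionBy_iff _ _).mp hz)
    have hM' : IsArtinian R (LC (maximalIdeal R) (n + 1) (ModuleCat.of R (M ⧸ L))) := by
      refine isArtinian_of_torsionBy x fun z => ?_
      obtain ⟨t, ht⟩ := LC.exists_pow_smul_eq_zero _ _ z
      exact ⟨t, ht _ (Ideal.pow_mem_pow hx t)⟩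
    exact isArtinian_of_injective _ (LC.map_mkQ_injective hL n)

/-- If `dim M ≤ d` and `r` kills the local cohomology of `M` in degree `d`, then `dim rM < d`.
The induction on `d` replaces `M` by `M / xᵏM` for a regular element `x` for which all the
submodules `xᵏ H` of the Artinian module `H` of degree `d - 1` contain a fixed `mˢ H`. -/
lemma supportDim_range_lsmul_lt_of_kills (d : ℕ) :
    ∀ (M : Type u) [AddCommGroup M] [Module R M] [Module.Finite R M],
      Module.supportDim R M ≤ (d : WithBot ℕ∞) → ∀ r : R,
        (∀ z : LC (maximalIdeal R) d (ModuleCat.of R M), r • z = 0) →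
        Module.supportDim R (LinearMap.range (LinearMap.lsmul R M r)) < (d : WithBot ℕ∞) := by
  induction d with
  | zero =>
    intro M _ _ _ hM r hr
    have hmax := Order.krullDim_nonpos_iff_forall_isMax.mp hM
    have hle : maximalIdeal R ≤ (Module.annihilator R M).radical := by
      rw [Ideal.radical_eq_sInf]
      refine le_sInf fun J ⟨hJ, hJp⟩ => ?_
      have hsupp : (⟨J, hJp⟩ : PrimeSpectrum R) ∈ Module.support R M :=
        Module.mem_support_iff_of_finite.mpr hJ
      have hJm : (⟨J, hJp⟩ : PrimeSpectrum R) ≤ closedPoint R := le_maximalIdeal hJp.ne_top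
      exact hmax ⟨_, hsupp⟩ (b := ⟨closedPoint R, Module.mem_support_mono hJm hsupp⟩) hJm
    obtain ⟨s, hs⟩ := Ideal.exists_radical_pow_le_of_fg (Module.annihilator R M)
      (IsNoetherian.noetherian _)
    have hs' := (Ideal.pow_right_mono hle s).trans hs
    rw [lt_zero_iff_eq_bot, Module.supportDim_eq_bot_iff_subsingleton]
    suffices h : ∀ y : M, r • y = 0 by
      refine ⟨?_⟩
      rintro ⟨_, y, rfl⟩ ⟨_, z, rfl⟩
      exact Subtype.ext ((h y).trans (h z).symm)
    intro y
    obtain ⟨z, hz⟩ := LC.exists_ev_eq (maximalIdeal R) (ModuleCat.of R M) y s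
      fun a ha => Module.mem_annihilator.mp (hs' ha) y
    have := congrArg (LC.ev (maximalIdeal R) (ModuleCat.of R M)) (hr z)
    rw [map_smul, map_zero, hz] at this
    exact this
  | succ d ih =>
    intro M _ _ _ hM r hr
    obtain ⟨L, s₀, hL, hdepth⟩ := exists_torsion_submodule (R := R) M
    have hr' : ∀ z : LC (maximalIdeal R) (d + 1) (ModuleCat.of R (M ⧸ L)), r • z = 0 := by
      intro z
      obtain ⟨y, hy⟩ := LC.map_mkQ_surjective hL (d + 1) z
      have := congrArg (LC.map (maximalIdeal R) (d + 1) (ModuleCat.ofHom L.mkQ)) (hr y)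
      rw [map_zero, map_smul, hy] at this
      exact this
    -- The choice of `x`: regular on `M / L`, with all `xᵏ H` containing a fixed `m ^ s₁ H`, where `H`
    -- is the local cohomology of `M / L` in degree `d`.
    have := LC.isArtinian (R := R) d (M ⧸ L)
    obtain ⟨Q, hQ, hQx⟩ := exists_primes_of_isArtinian
      (⊤ : Submodule R (LC (maximalIdeal R) d (ModuleCat.of R (M ⧸ L))))
    obtain ⟨x, hx, hxQ, hreg⟩ := exists_regular_notMem (M ⧸ L) hdepth Q hQ
    obtain ⟨s₁, hs₁⟩ := hQx x hxQ
    have hM' : Module.supportDim R (M ⧸ L) ≤ ((d + 1 : ℕ) : WithBot ℕ∞) :=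
      (Module.supportDim_le_of_surjective L.mkQ L.mkQ_surjective).trans hM
    have h₁ : Module.supportDim R (LinearMap.range (LinearMap.lsmul R (M ⧸ L) r)) <
        ((d + 1 : ℕ) : WithBot ℕ∞) := by
      refine supportDim_range_lsmul_lt r d s₁ fun a ha => ?_
      refine supportDim_range_lsmul_lt_of_quotient x hx (a * r) d fun k => ?_
      have hregk : IsSMulRegular (M ⧸ L) (x ^ (k + 1)) := hreg.pow (k + 1)
      refine ih (QuotSMulTop (x ^ (k + 1)) (M ⧸ L)) ?_ (a * r) ?_
      · rwa [← add_one_le_add_one_iff,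
          Module.supportDim_quotSMulTop_succ_eq_supportDim hregk
            (Ideal.pow_mem_of_mem _ hx (k + 1) k.succ_pos)]
      · intro w
        -- `r • w` lifts to `H` since `r` kills the next cohomology; for `a` in `m ^ s₁`, the multiple
        -- `a` times that lift lies in `xᵏ⁺¹ H`, so it dies in the cohomology of the quotient.
        obtain ⟨v, hv⟩ := LC.exists_map_eq hregk d (r • w) (by rw [map_smul, hr'])
        obtain ⟨u, -, hu⟩ := hs₁ (k + 1)
          (Submodule.smul_mem_smul ha (Submodule.mem_top (x := v)))
        have hu' : x ^ (k + 1) • u = a • v := hu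
        rw [mul_smul, ← hv, ← map_smul, ← hu', LC.smul_map_eq_zero]
    refine supportDim_range_lsmul_lt r d s₀ fun a ha => lt_of_le_of_lt
      (supportDim_le_of_support_subset fun p hp => ?_) h₁
    obtain ⟨y, hy⟩ := (mem_support_range_lsmul _ _).mp hp
    refine (mem_support_range_lsmul _ _).mpr ⟨Submodule.Quotient.mk y, fun c hc h0 => hy c hc ?_⟩
    rw [← Submodule.Quotient.mk_smul, ← Submodule.Quotient.mk_smul,
      Submodule.Quotient.mk_eq_zero] at h0
    have := Submodule.smul_mem_smul ha h0
    rw [hL, Submodule.mem_bot] at this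
    rw [mul_smul, smul_comm c a, this]

/-- The annihilator of top local cohomology, in the derived category model: `r` kills it iff
`dim rM < d`. Conversely to the previous lemma, multiplication by `r` on `M` factors through `rM`,
whose cohomology in degree `d` vanishes as soon as `dim rM < d`. -/
lemma kills_iff (d : ℕ) (M : Type u) [AddCommGroup M] [Module R M] [Module.Finite R M]
    (hM : Module.supportDim R M ≤ (d : WithBot ℕ∞)) (r : R) :
    (∀ z : LC (maximalIdeal R) d (ModuleCat.of R M), r • z = 0) ↔
      Module.supportDim R (LinearMap.range (LinearMap.lsmul R M r)) < (d : WithBot ℕ∞) := by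
  refine ⟨supportDim_range_lsmul_lt_of_kills d M hM r, fun h z => ?_⟩
  have := LC.subsingleton_of_supportDim_lt d _ h
  let f : ModuleCat.of R M ⟶ ModuleCat.of R (LinearMap.range (LinearMap.lsmul R M r)) :=
    ModuleCat.ofHom (LinearMap.lsmul R M r).rangeRestrict
  let g : ModuleCat.of R (LinearMap.range (LinearMap.lsmul R M r)) ⟶ ModuleCat.of R M :=
    ModuleCat.ofHom (Submodule.subtype _)
  have hfg : f ≫ g = r • 𝟙 _ := by ext; rfl
  rw [← LC.map_smul_id, ← hfg, ← LC.map_map, Subsingleton.elim (LC.map _ d f z) 0, map_zero]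

end Top

/-! ### Comparison with Mathlib's local cohomology -/

section Comparison

open Limits Opposite

variable {R : Type u} [CommRing R]

instance preservesFiltered : PreservesFilteredColimitsOfSize.{0, 0} (forget (ModuleCat.{u} R)) :=
  preservesFilteredColimitsOfSize_shrink.{0, u, 0, u} _

lemma kills_colimit_iff {J : Type} [SmallCategory J] [IsFiltered J] (F : J ⥤ ModuleCat.{u} R)
    (c : Cocone F) (hc : IsColimit c) (r : R) :
    (∀ z : c.pt, r • z = 0) ↔
      ∀ (j : J) (x : F.obj j), ∃ (k : J) (f : j ⟶ k), F.map f (r • x) = 0 := by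
  constructor
  · intro H j x
    have h0 : c.ι.app j (r • x) = c.ι.app j 0 := by
      rw [map_smul, map_zero]
      exact H _
    obtain ⟨k, f, g, hfg⟩ := Concrete.isColimit_exists_of_rep_eq _ hc _ _ h0
    exact ⟨k, f, by rw [hfg, map_zero]⟩
  · intro H z
    obtain ⟨j, x, rfl⟩ := Concrete.isColimit_exists_rep _ hc z
    obtain ⟨k, f, h0⟩ := H j x
    rw [← map_smul, ← c.w f, ConcreteCategory.comp_apply, h0, map_zero]

/-- Annihilation of `localCohomology`, read off at the finite stages of the colimit. -/
lemma localCohomology_kills_iff (I : Ideal R) (n : ℕ) (M : ModuleCat.{u} R) (r : R) :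
    (∀ z : (localCohomology I n).obj M, r • z = 0) ↔
      ∀ (t : ℕ) (α : ((_root_.Ext R (ModuleCat.{u} R) n).obj (op (Q I t))).obj M),
        ∃ (t' : ℕ) (h : t ≤ t'),
          ((_root_.Ext R (ModuleCat.{u} R) n).map (proj I h).op).app M (r • α) = 0 := by
  let D := localCohomology.diagram (localCohomology.idealPowersDiagram I) n
  have hD : HasColimit D := localCohomology.hasColimitDiagram.{u, 0} _ n
  let c := ((evaluation _ (ModuleCat.{u} R)).obj M).mapCocone (colimit.cocone D)
  have hc : IsColimit c := isColimitOfPreserves _ (colimit.isColimit D)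
  refine (kills_colimit_iff _ c hc r).trans ⟨fun H t α => ?_, fun H t α => ?_⟩
  · obtain ⟨⟨⟨t'⟩⟩, f, h⟩ := H (op (op t)) α
    exact ⟨t', leOfHom f.unop.unop, h⟩
  · obtain ⟨t', h, h0⟩ := H t.unop.unop α
    exact ⟨op (op t'), (homOfLE h).op.op, h0⟩

/-- `f`, an element of the `n`-th term of the cochain complex of modules opposite to `K`, is a
cocycle that represents the cohomology class `z`. -/
def Rep (K : ChainComplex (ModuleCat.{u} R)ᵒᵖ ℕ) (n : ℕ) (f : (K.X n).unop)
    (z : (K.homology n).unop) : Prop :=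
  ∃ w : (K.opcycles n).unop, (K.pOpcycles n).unop w = f ∧ (K.homologyι n).unop w = z

namespace Rep

variable {K K' : ChainComplex (ModuleCat.{u} R)ᵒᵖ ℕ} {n : ℕ}

lemma exists_rep (z : (K.homology n).unop) : ∃ f, Rep K n f z := by
  obtain ⟨w, hw⟩ := (ModuleCat.epi_iff_surjective _).mp (inferInstance :
    Epi (K.homologyι n).unop) z
  exact ⟨_, w, rfl, hw⟩

lemma smul {f : (K.X n).unop} {z : (K.homology n).unop} (h : Rep K n f z) (r : R) :
    Rep K n (r • f) (r • z) := by
  obtain ⟨w, rfl, rfl⟩ := h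
  exact ⟨r • w, map_smul _ _ _, map_smul _ _ _⟩

lemma map (φ : K ⟶ K') {f : (K'.X n).unop} {z : (K'.homology n).unop} (h : Rep K' n f z) :
    Rep K n ((φ.f n).unop f) ((HomologicalComplex.homologyMap φ n).unop z) := by
  obtain ⟨w, rfl, rfl⟩ := h
  refine ⟨(HomologicalComplex.opcyclesMap φ n).unop w, ?_, ?_⟩
  · rw [← ConcreteCategory.comp_apply, ← ConcreteCategory.comp_apply, ← unop_comp, ← unop_comp,
      HomologicalComplex.p_opcyclesMap]
  · rw [← ConcreteCategory.comp_apply, ← ConcreteCategory.comp_apply, ← unop_comp, ← unop_comp,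
      HomologicalComplex.homologyι_naturality]

lemma exists_class (f : (K.X n).unop) (hf : (K.d (n + 1) n).unop f = 0) : ∃ z, Rep K n f z := by
  have h := (K.opcyclesIsCokernel (n + 1) n (by simp))
  have h' := (ShortComplex.exact_of_g_is_cokernel (ShortComplex.mk _ _
    (K.d_pOpcycles (n + 1) n)) h).unop
  obtain ⟨w, hw⟩ := (ShortComplex.moduleCat_exact_iff _).mp h' f hf
  exact ⟨_, w, hw, rfl⟩

lemma cocycle {f : (K.X n).unop} {z : (K.homology n).unop} (h : Rep K n f z) :
    (K.d (n + 1) n).unop f = 0 := by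
  obtain ⟨w, rfl, rfl⟩ := h
  rw [← ConcreteCategory.comp_apply, ← unop_comp, HomologicalComplex.d_pOpcycles]
  rfl

lemma eq_zero_iff {f : (K.X n).unop} {z : (K.homology n).unop} (h : Rep K n f z)
    (p : ℕ) (hp : (ComplexShape.down ℕ).next n = p) :
    z = 0 ↔ ∃ g : (K.X p).unop, (K.d n p).unop g = f := by
  obtain ⟨w, rfl, rfl⟩ := h
  have h := K.homologyIsKernel n p hp
  have h' := (ShortComplex.exact_of_f_is_kernel (ShortComplex.mk _ _
    (K.homologyι_comp_fromOpcycles n p)) h).unop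
  have hinj : Function.Injective (K.pOpcycles n).unop :=
    (ModuleCat.mono_iff_injective _).mp (inferInstanceAs (Mono (K.pOpcycles n).unop))
  constructor
  · intro hz
    obtain ⟨g, hg⟩ := (ShortComplex.moduleCat_exact_iff _).mp h' w hz
    refine ⟨g, ?_⟩
    rw [← hg, ← K.p_fromOpcycles n p]
    rfl
  · rintro ⟨g, hg⟩
    rw [← K.p_fromOpcycles n p, unop_comp, ConcreteCategory.comp_apply] at hg
    rw [← hinj hg, ← ConcreteCategory.comp_apply, ← unop_comp,
      HomologicalComplex.homologyι_comp_fromOpcycles]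
    rfl

end Rep

/-- The chain complex in the opposite category which computes `Ext(X, M)` from a projective
resolution `P` of `X`: its terms are the modules `Hom(P_n, M)`. -/
noncomputable abbrev homComplex {X : ModuleCat.{u} R} (P : ProjectiveResolution X)
    (M : ModuleCat.{u} R) : ChainComplex (ModuleCat.{u} R)ᵒᵖ ℕ :=
  (((linearYoneda R (ModuleCat.{u} R)).obj M).rightOp.mapHomologicalComplex _).obj P.complex

/-- The identification of the left derived functors defining `Ext(X, M)` with the cohomology of
`Hom(P, M)`, for a projective resolution `P` of `X`. -/
noncomputable def extEquiv {X : ModuleCat.{u} R} (P : ProjectiveResolution X)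
    (M : ModuleCat.{u} R) (n : ℕ) :
    ((_root_.Ext R (ModuleCat.{u} R) n).obj (op X)).obj M ≃ₗ[R]
      ((homComplex P M).homology n).unop :=
  (P.isoLeftDerivedObj ((linearYoneda R (ModuleCat.{u} R)).obj M).rightOp n).symm.unop.toLinearEquiv

/-- The cocycle `f : P_n ⟶ M` represents the class `α` in `Ext^n(X, M)`. -/
def ExtRep {X : ModuleCat.{u} R} (P : ProjectiveResolution X) (M : ModuleCat.{u} R) (n : ℕ)
    (f : P.complex.X n ⟶ M) (α : ((_root_.Ext R (ModuleCat.{u} R) n).obj (op X)).obj M) : Prop :=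
  Rep (homComplex P M) n f (extEquiv P M n α)

namespace ExtRep

variable {X X' : ModuleCat.{u} R} {P : ProjectiveResolution X} {P' : ProjectiveResolution X'}
  {M : ModuleCat.{u} R} {n : ℕ}

lemma exists_rep (P : ProjectiveResolution X)
    (α : ((_root_.Ext R (ModuleCat.{u} R) n).obj (op X)).obj M) :
    ∃ f, ExtRep P M n f α :=
  Rep.exists_rep (extEquiv P M n α)

lemma exists_class (f : P.complex.X n ⟶ M) (hf : P.complex.d (n + 1) n ≫ f = 0) :
    ∃ α, ExtRep P M n f α := by
  obtain ⟨z, hz⟩ := Rep.exists_class (K := homComplex P M) (n := n) f hf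
  obtain ⟨α, rfl⟩ := (extEquiv P M n).surjective z
  exact ⟨α, hz⟩

lemma cocycle {f : P.complex.X n ⟶ M} {α} (h : ExtRep P M n f α) :
    P.complex.d (n + 1) n ≫ f = 0 := Rep.cocycle h

lemma smul {f : P.complex.X n ⟶ M} {α} (h : ExtRep P M n f α) (r : R) :
    ExtRep P M n (r • f) (r • α) := by
  have := Rep.smul h r
  rw [← map_smul] at this
  exact this

lemma map {f : P.complex.X n ⟶ M} {α} (h : ExtRep P M n f α) {g : X' ⟶ X}
    (φ : ProjectiveResolution.Hom P' P g) :
    ExtRep P' M n (φ.hom.f n ≫ f) (((_root_.Ext R (ModuleCat.{u} R) n).map g.op).app M α) := by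
  have h1 := Rep.map
    ((((linearYoneda R (ModuleCat.{u} R)).obj M).rightOp.mapHomologicalComplex _).map φ.hom) h
  have h2 := ProjectiveResolution.isoLeftDerivedObj_inv_naturality g P' P φ.hom
    (by simpa using φ.hom_f_zero_comp_π_f_zero)
    (((linearYoneda R (ModuleCat.{u} R)).obj M).rightOp) n
  have h3 : (extEquiv P' M n) (((_root_.Ext R (ModuleCat.{u} R) n).map g.op).app M α) =
    (HomologicalComplex.homologyMap
    ((((linearYoneda R (ModuleCat.{u} R)).obj M).rightOp.mapHomologicalComplex _).map φ.hom) n).unop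
      (extEquiv P M n α) := congr(($h2).unop α)
  rw [← h3] at h1
  exact h1

lemma eq_zero_iff {f : P.complex.X n ⟶ M} {α} (h : ExtRep P M n f α)
    (p : ℕ) (hp : (ComplexShape.down ℕ).next n = p) :
    α = 0 ↔ ∃ g : P.complex.X p ⟶ M, P.complex.d n p ≫ g = f :=
  Iff.trans (extEquiv P M n).map_eq_zero_iff.symm (Rep.eq_zero_iff h p hp)

end ExtRep

/-- The description of coboundaries in derived category `Ext`, degree `0` included. -/
lemma extMk_eq_zero_iff {X M : ModuleCat.{u} R} (P : ProjectiveResolution X) {n : ℕ}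
    (f : P.complex.X n ⟶ M) (hf : P.complex.d (n + 1) n ≫ f = 0)
    (p : ℕ) (hp : (ComplexShape.down ℕ).next n = p) :
    P.extMk f (n + 1) rfl hf = 0 ↔ ∃ g : P.complex.X p ⟶ M, P.complex.d n p ≫ g = f := by
  cases n with
  | zero =>
    have hp' : ¬ (ComplexShape.down ℕ).Rel 0 p := by simp
    simp only [P.complex.shape _ _ hp', zero_comp, exists_const]
    refine ⟨fun h => ?_, fun h => by subst h; simp⟩
    simp only [← P.extEquivCohomologyClass.apply_eq_iff_eq,
      ProjectiveResolution.extEquivCohomologyClass_extMk,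
      ProjectiveResolution.extEquivCohomologyClass_zero,
      CochainComplex.HomComplex.CohomologyClass.mk_eq_zero_iff] at h
    rw [CochainComplex.HomComplex.Cocycle.toSingleMk_mem_coboundaries_iff _ _ _ _ _ 1
      (by simp)] at h
    obtain ⟨g, hg⟩ := h
    rw [(P.cochainComplex.isZero_of_isStrictlyLE 0 1 (by simp)).eq_of_src g 0, comp_zero] at hg
    rw [← cancel_epi (P.cochainComplexXIso _ 0 rfl).hom, ← hg, comp_zero]
  | succ n =>
    obtain rfl : n = p := by simpa using hp
    exact P.extMk_eq_zero_iff f _ rfl hf n rfl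

lemma smul_extMk {X M : ModuleCat.{u} R} (P : ProjectiveResolution X) {n : ℕ}
    (f : P.complex.X n ⟶ M) (hf : P.complex.d (n + 1) n ≫ f = 0) (r : R) :
    r • P.extMk f (n + 1) rfl hf = P.extMk (r • f) (n + 1) rfl (by simp [hf]) := by
  rw [Ext.smul_eq_comp_mk₀, ProjectiveResolution.extMk_comp_mk₀]
  congr 1

variable (I : Ideal R) (n : ℕ) (M : ModuleCat.{u} R) (r : R)

/-- Multiplication by `r` on the direct limit of the `Ext^n(R ⧸ I ^ t, M)` is zero, spelled out in
terms of projective resolutions: for every cocycle `f : P_n ⟶ M`, where `P` resolves `R ⧸ I ^ t`,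
the pullback of `r • f` to resolutions of some `R ⧸ I ^ t'` is a coboundary. In degree `0` the
differential out of `P'_0` is the junk value `0`, so that coboundaries vanish, as they should. -/
def BoundaryCriterion : Prop :=
  ∀ (t : ℕ) (P : ProjectiveResolution (Q I t)) (f : P.complex.X n ⟶ M),
    P.complex.d (n + 1) n ≫ f = 0 → ∃ (t' : ℕ) (h : t ≤ t'),
      ∀ (P' : ProjectiveResolution (Q I t')) (φ : ProjectiveResolution.Hom P' P (proj I h)),
        ∃ g : P'.complex.X ((ComplexShape.down ℕ).next n) ⟶ M,
          P'.complex.d n _ ≫ g = φ.hom.f n ≫ (r • f)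

lemma localCohomology_kills_iff_criterion :
    (∀ z : (localCohomology I n).obj M, r • z = 0) ↔ BoundaryCriterion I n M r := by
  rw [localCohomology_kills_iff]
  constructor
  · intro H t P f hf
    obtain ⟨α, hα⟩ := ExtRep.exists_class f hf
    obtain ⟨t', h, h0⟩ := H t α
    exact ⟨t', h, fun P' φ => (((hα.smul r).map φ).eq_zero_iff _ rfl).mp h0⟩
  · intro H t α
    let P := projectiveResolution (Q I t)
    obtain ⟨f, hα⟩ := ExtRep.exists_rep P α
    obtain ⟨t', h, h0⟩ := H t P f hα.cocycle
    let P' := projectiveResolution (Q I t')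
    let φ : ProjectiveResolution.Hom P' P (proj I h) :=
      ⟨ProjectiveResolution.lift (proj I h) P' P, ProjectiveResolution.lift_commutes_zero _ P' P⟩
    exact ⟨t', h, (((hα.smul r).map φ).eq_zero_iff _ rfl).mpr (h0 P' φ)⟩

lemma LC_kills_iff_criterion :
    (∀ z : LC I n M, r • z = 0) ↔ BoundaryCriterion I n M r := by
  constructor
  · intro H t P f hf
    have h0 := H (LC.of I n M t (P.extMk f (n + 1) rfl hf))
    rw [← map_smul] at h0
    obtain ⟨t', h, h0⟩ := Module.DirectLimit.of.zero_exact h0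
    refine ⟨t', h, fun P' φ => ?_⟩
    rw [trans_apply, smul_extMk, ProjectiveResolution.mk₀_comp_extMk _ _ _ _ φ] at h0
    exact (extMk_eq_zero_iff P' _ _ _ rfl).mp h0
  · intro H z
    obtain ⟨t, α, rfl⟩ := Module.DirectLimit.exists_of z
    let P := projectiveResolution (Q I t)
    obtain ⟨f, hf, rfl⟩ := P.extMk_surjective α (n + 1) rfl
    obtain ⟨t', h, h0⟩ := H t P f hf
    let P' := projectiveResolution (Q I t')
    let φ : ProjectiveResolution.Hom P' P (proj I h) :=
      ⟨ProjectiveResolution.lift (proj I h) P' P, ProjectiveResolution.lift_commutes_zero _ P' P⟩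
    rw [← map_smul, ← Module.DirectLimit.of_f (hij := h), trans_apply, smul_extMk,
      ProjectiveResolution.mk₀_comp_extMk _ _ _ _ φ,
      (extMk_eq_zero_iff P' _ _ _ rfl).mpr (h0 P' φ), map_zero]

end Comparison

/-- For finite modules, the dimension of `R ⧸ Ann M` is the dimension of the support. -/
lemma moduleDim_eq (R M : Type u) [CommRing R] [AddCommGroup M] [Module R M] [Module.Finite R M] :
    moduleDim R M = Module.supportDim R M :=
  (Module.supportDim_eq_ringKrullDim_quotient_annihilator R M).symm

end TopLC

/-- Let `(R, m)` be a Noetherian local ring and `M` a finitely generated `R`-module of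
dimension `d`, with unmixed component `U = U_M(0)` (the largest submodule of dimension
`< d`).  Then `Ann H^d_m(M) = Ann (M/U) = {r : dim M/(0 :_M r) < d}`; in particular
`H^d_m(M) ≠ 0`. -/
theorem annihilator_top_localCohomology
    {R : Type u} [CommRing R] [IsNoetherianRing R] [IsLocalRing R]
    {M : Type u} [AddCommGroup M] [Module R M] [Module.Finite R M]
    {d : ℕ} (hd : moduleDim R M = d)
    (U : Submodule R M) (hUdim : moduleDim R U < (d : WithBot ℕ∞))
    (hUmax : ∀ N : Submodule R M, moduleDim R N < (d : WithBot ℕ∞) → N ≤ U) :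
    Module.annihilator R ((localCohomology (maximalIdeal R) d).obj (ModuleCat.of R M)) =
        Module.annihilator R (M ⧸ U) ∧
    (∀ r : R, r ∈ Module.annihilator R (M ⧸ U) ↔
        moduleDim R (M ⧸ Submodule.torsionBy R M r) < (d : WithBot ℕ∞)) ∧
    Nontrivial ((localCohomology (maximalIdeal R) d).obj (ModuleCat.of R M)) := by
  -- All three conditions on `r` are compared with `dim rM < d`.
  have hU (r : R) : r ∈ Module.annihilator R (M ⧸ U) ↔
      Module.supportDim R (LinearMap.range (LinearMap.lsmul R M r)) < (d : WithBot ℕ∞) := by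
    have h1 : r ∈ Module.annihilator R (M ⧸ U) ↔ LinearMap.range (LinearMap.lsmul R M r) ≤ U := by
      rw [Module.mem_annihilator, U.mkQ_surjective.forall, LinearMap.range_le_iff_comap,
        Submodule.eq_top_iff']
      refine forall_congr' fun x => ?_
      rw [← map_smul, Submodule.mkQ_apply, Submodule.Quotient.mk_eq_zero]
      rfl
    rw [h1]
    refine ⟨fun h => lt_of_le_of_lt ?_ hUdim, fun h => hUmax _ ?_⟩
    · rw [TopLC.moduleDim_eq]
      exact Module.supportDim_le_of_injective (Submodule.inclusion h)
        (Submodule.inclusion_injective h)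
    · rwa [TopLC.moduleDim_eq]
  have hLC (r : R) :
      r ∈ Module.annihilator R
        ((localCohomology (maximalIdeal R) d).obj (ModuleCat.of R M)) ↔
      Module.supportDim R (LinearMap.range (LinearMap.lsmul R M r)) < (d : WithBot ℕ∞) := by
    rw [Module.mem_annihilator, TopLC.localCohomology_kills_iff_criterion,
      ← TopLC.LC_kills_iff_criterion]
    exact TopLC.kills_iff d M (by rw [← TopLC.moduleDim_eq, hd]) r
  refine ⟨Ideal.ext fun r => (hLC r).trans (hU r).symm, fun r => (hU r).trans ?_, ?_⟩
  · have e : (M ⧸ Submodule.torsionBy R M r) ≃ₗ[R] LinearMap.range (LinearMap.lsmul R M r) :=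
      (LinearMap.lsmul R M r).quotKerEquivRange
    rw [TopLC.moduleDim_eq, Module.supportDim_eq_of_equiv e]
  · by_contra hN
    rw [not_nontrivial_iff_subsingleton] at hN
    have h1 := (hLC 1).mp (Module.mem_annihilator.mpr fun z => Subsingleton.elim _ _)
    have hsurj : LinearMap.range (LinearMap.lsmul R M 1) = ⊤ :=
      LinearMap.range_eq_top.mpr fun x => ⟨x, one_smul R x⟩
    rw [hsurj, Module.supportDim_eq_of_equiv Submodule.topEquiv, ← TopLC.moduleDim_eq, hd] at h1
    exact lt_irrefl _ h1
end
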